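/- arXiv:2507.10954 — 2 statements merged into one kernel-verified Lean document; each statement's English description precedes it below -/
import Mathlib

section
/- Let n ≥ 2 and let the n-tuples p = (p₁,…,pₙ) and q = (q₁,…,qₙ) ∈ (1,∞)ⁿ satisfy p ≺ q, and let λ ∈ ℝ. Then the function x ↦ ∏_{j=1}^n ζ(p_j, x) − λ ∏_{j=1}^n ζ(q_j, x) is completely monotonic on (0,∞) if and only if λ ≤ ∏_{j=1}^n (q_j − 1)/(p_j − 1); and the function x ↦ λ ∏_{j=1}^n ζ(q_j, x) − ∏_{j=1}^n ζ(p_j, x) is completely monotonic on (0,∞) if and only if λ ≥ 1. -/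
/-!
For `p > 1` the functions `ζ(p, ·)` and `(p - 1) ζ(p, ·)` are Laplace transforms of the measures on
`(0, ∞)` with densities `kA t * t ^ (p - 1) / Γ(p)` and `kB t * t ^ (p - 2) / Γ(p - 1)`, where
`kA t = 1 / (1 - exp (-t))` and `kB t = t / (1 - exp (-t))`. A product of two such functions
corresponds to a convolution, and a difference of Laplace transforms is completely monotonic as soon
as the measures are ordered (`IsLaplace.sub`).

Let `a + b = c + d` with `d ≤ b ≤ a ≤ c`. The convolution at `s` of two densities of the form
`k t * t ^ (a - 1) / Γ(a)` integrates `k y * k (s - y)` against a weight of Beta type. The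
symmetrised weights for `(a, b)` and `(c, d)` have the same total mass, and the one for `(a, b)` is
more concentrated at the midpoint `s / 2` in the sense of monotone likelihood ratio (`symW_cross`).
Since `kA` is log-convex and `kB` is log-concave, the products `k y * k (s - y)` are monotone in the
distance of `y` to the midpoint, and Chebyshev's inequality (`chebyshev`) orders the convolutions:
`ζ(c, ·) ζ(d, ·) - ζ(a, ·) ζ(b, ·)` is completely monotonic (`hzeta_pair`), and for the normalised
functions `(p - 1) ζ(p, ·)` the same holds with the opposite sign (`hzeta_pair'`).

If `p ≺ q`, one gets from `q` to `p` by finitely many moves of two coordinates towards each other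
(`majorization_induction`). As products and sums of completely monotonic functions are completely
monotonic, `∏ ζ(q j, ·) - ∏ ζ(p j, ·)` and `∏ (p j - 1) ζ(p j, ·) - ∏ (q j - 1) ζ(q j, ·)` are
completely monotonic. Adding nonnegative multiples of `∏ ζ(q j, ·)` gives both sufficiency claims.
For necessity only the sign of the function is needed: `(p - 1) ζ(p, x) ~ x ^ (1 - p)` as `x → ∞`
and `ζ(p, x) ~ x ^ (-p)` as `x → 0⁺`, and `∑ p j = ∑ q j`, so the two limits force
`l ≤ ∏ (q j - 1) / (p j - 1)` and `1 ≤ l` respectively.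
-/

open Real Set

/-- A function is completely monotonic on `(0, ∞)` if it is infinitely differentiable there
and `(-1)^m h^(m)(x) ≥ 0` for all `m ∈ ℕ` and `x > 0`. -/
def CompletelyMonotonicOn (h : ℝ → ℝ) : Prop :=
  ContDiffOn ℝ (⊤ : ℕ∞) h (Set.Ioi 0) ∧
  ∀ (m : ℕ) (x : ℝ), 0 < x → 0 ≤ (-1 : ℝ) ^ m * iteratedDerivWithin m h (Set.Ioi 0) x

/-- `p ≺ q` : `p` is (strictly) majorized by `q`. -/
def Majorizes {n : ℕ} (p q : Fin n → ℝ) : Prop :=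
  (∀ i j : Fin n, i ≤ j → p j ≤ p i) ∧
  (∀ i j : Fin n, i ≤ j → q j ≤ q i) ∧
  (∀ k : Fin n, ∑ j ∈ Finset.univ.filter (fun j => j ≤ k), p j ≤
      ∑ j ∈ Finset.univ.filter (fun j => j ≤ k), q j) ∧
  (∑ j, p j = ∑ j, q j) ∧ p ≠ q

/-- The Hurwitz zeta function `ζ(p, x) = ∑_{k=0}^∞ (k + x)^{-p}`. -/
noncomputable def hzeta (p x : ℝ) : ℝ :=
  ∑' k : ℕ, ((k : ℝ) + x) ^ (-p)


open MeasureTheory ProbabilityTheory Filter Topology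
open scoped ENNReal

/-! ### Complete monotonicity -/

namespace CompletelyMonotonicOn

lemma congr {f g : ℝ → ℝ} (hf : CompletelyMonotonicOn f) (h : EqOn g f (Ioi 0)) :
    CompletelyMonotonicOn g := by
  refine ⟨hf.1.congr h, fun m x hx => ?_⟩
  rw [iteratedDerivWithin_congr h hx]
  exact hf.2 m x hx

lemma nonneg {f : ℝ → ℝ} (hf : CompletelyMonotonicOn f) {x : ℝ} (hx : 0 < x) : 0 ≤ f x := by
  simpa using hf.2 0 x hx

lemma zero : CompletelyMonotonicOn (fun _ => 0) := by
  refine ⟨contDiffOn_const, fun m x _ => ?_⟩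
  simp

lemma one : CompletelyMonotonicOn (fun _ => 1) := by
  refine ⟨contDiffOn_const, fun m x _ => ?_⟩
  rw [iteratedDerivWithin_const]
  split_ifs with h <;> simp [h]

lemma add {f g : ℝ → ℝ} (hf : CompletelyMonotonicOn f) (hg : CompletelyMonotonicOn g) :
    CompletelyMonotonicOn (fun x => f x + g x) := by
  refine ⟨hf.1.add hg.1, fun m x hx => ?_⟩
  have := iteratedDerivWithin_add (n := m) (f := f) (g := g) (s := Ioi 0) (x := x) hx
    (uniqueDiffOn_Ioi 0)
    ((hf.1.of_le (by exact_mod_cast le_top)) x hx) ((hg.1.of_le (by exact_mod_cast le_top)) x hx)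
  change 0 ≤ (-1) ^ m * iteratedDerivWithin m (f + g) (Ioi 0) x
  rw [this, mul_add]
  exact add_nonneg (hf.2 m x hx) (hg.2 m x hx)

/-- Leibniz: the sign `(-1)^m` splits as `(-1)^i (-1)^(m-i)` over the terms. -/
lemma mul {f g : ℝ → ℝ} (hf : CompletelyMonotonicOn f) (hg : CompletelyMonotonicOn g) :
    CompletelyMonotonicOn (fun x => f x * g x) := by
  refine ⟨hf.1.mul hg.1, fun m x hx => ?_⟩
  have := iteratedDerivWithin_mul (n := m) (f := f) (g := g) (s := Ioi 0) (x := x) hx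
    (uniqueDiffOn_Ioi 0)
    ((hf.1.of_le (by exact_mod_cast le_top)) x hx) ((hg.1.of_le (by exact_mod_cast le_top)) x hx)
  change 0 ≤ (-1) ^ m * iteratedDerivWithin m (f * g) (Ioi 0) x
  rw [this, Finset.mul_sum]
  refine Finset.sum_nonneg fun i hi => ?_
  have hi' : i ≤ m := by simpa [Nat.lt_succ_iff] using hi
  have h1 := mul_nonneg (hf.2 i x hx) (hg.2 (m - i) x hx)
  have h2 : (-1 : ℝ) ^ m = (-1) ^ i * (-1) ^ (m - i) := by rw [← pow_add, Nat.add_sub_cancel' hi']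
  have h3 := mul_nonneg (Nat.cast_nonneg (α := ℝ) (m.choose i)) h1
  rw [h2]
  linarith

lemma const_mul {f : ℝ → ℝ} (hf : CompletelyMonotonicOn f) {c : ℝ} (hc : 0 ≤ c) :
    CompletelyMonotonicOn (fun x => c * f x) := by
  refine mul ⟨contDiffOn_const, fun m x _ => ?_⟩ hf
  rw [iteratedDerivWithin_const]
  split_ifs with h <;> simp [h, hc]

lemma prod {ι : Type*} (s : Finset ι) {f : ι → ℝ → ℝ}
    (hf : ∀ i ∈ s, CompletelyMonotonicOn (f i)) :
    CompletelyMonotonicOn (fun x => ∏ i ∈ s, f i x) := by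
  classical
  induction s using Finset.induction_on with
  | empty => simpa using one
  | insert a s ha ih =>
    simp only [Finset.prod_insert ha]
    exact (hf a (by simp)).mul (ih fun i hi => hf i (by simp [hi]))

end CompletelyMonotonicOn

/-! ### Laplace transforms of measures -/

/-- `F` is, on `(0, ∞)`, the Laplace transform of the measure `μ`. -/
structure IsLaplace (μ : Measure ℝ) (F : ℝ → ℝ) : Prop where
  nonneg : ∀ x, 0 < x → 0 ≤ F x
  eq : ∀ x, 0 < x → ∫⁻ t, ENNReal.ofReal (exp (-(x * t))) ∂μ = ENNReal.ofReal (F x)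

lemma IsLaplace.integrable {μ : Measure ℝ} {F : ℝ → ℝ} (h : IsLaplace μ F) {x : ℝ} (hx : 0 < x) :
    Integrable (fun t => exp (-(x * t))) μ := by
  refine ⟨by fun_prop, ?_⟩
  rw [hasFiniteIntegral_iff_ofReal (ae_of_all _ fun t => (exp_pos _).le), h.eq x hx]
  exact ENNReal.ofReal_lt_top

lemma IsLaplace.eq_mgf {μ : Measure ℝ} {F : ℝ → ℝ} (h : IsLaplace μ F) {x : ℝ} (hx : 0 < x) :
    F x = mgf (fun t => -t) μ x := by
  have h1 := ofReal_integral_eq_lintegral_ofReal (h.integrable hx)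
    (ae_of_all _ fun t => (exp_pos _).le)
  rw [h.eq x hx, ENNReal.ofReal_eq_ofReal_iff (integral_nonneg fun t => (exp_pos _).le)
    (h.nonneg x hx)] at h1
  rw [← h1]
  simp [mgf]

lemma IsLaplace.mem_interior {μ : Measure ℝ} {F : ℝ → ℝ} (h : IsLaplace μ F) {x : ℝ}
    (hx : 0 < x) : x ∈ interior (integrableExpSet (fun t : ℝ => -t) μ) := by
  refine _root_.mem_interior.2 ⟨Ioi 0, fun y hy => ?_, isOpen_Ioi, hx⟩
  have := h.integrable hy
  simpa [integrableExpSet] using this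

/-- A difference of Laplace transforms of measures on `(0, ∞)` is completely monotonic if the
measures are ordered: the `m`-th derivative brings down the factor `(-t)^m`. -/
lemma IsLaplace.sub {μ ν : Measure ℝ} {F G : ℝ → ℝ} (hF : IsLaplace μ F) (hG : IsLaplace ν G)
    (hle : ν ≤ μ) (hsupp : μ (Iic 0) = 0) : CompletelyMonotonicOn (fun x => F x - G x) := by
  have key : EqOn (fun x => F x - G x) (mgf (fun t => -t) μ - mgf (fun t => -t) ν) (Ioi 0) :=
    fun x hx => by simp [hF.eq_mgf hx, hG.eq_mgf hx]
  refine CompletelyMonotonicOn.congr ⟨?_, fun m x hx => ?_⟩ key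
  · exact ContDiffOn.sub
      (fun x hx => (analyticAt_mgf (hF.mem_interior hx)).contDiffAt.contDiffWithinAt)
      (fun x hx => (analyticAt_mgf (hG.mem_interior hx)).contDiffAt.contDiffWithinAt)
  · have hμ := (analyticAt_mgf (hF.mem_interior hx)).contDiffAt (n := m)
    have hν := (analyticAt_mgf (hG.mem_interior hx)).contDiffAt (n := m)
    have hx' : x ∈ Ioi (0 : ℝ) := hx
    rw [iteratedDerivWithin_sub hx' (uniqueDiffOn_Ioi 0) hμ.contDiffWithinAt hν.contDiffWithinAt,
      iteratedDerivWithin_of_isOpen isOpen_Ioi hx', iteratedDerivWithin_of_isOpen isOpen_Ioi hx',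
      iteratedDeriv_mgf (hF.mem_interior hx), iteratedDeriv_mgf (hG.mem_interior hx),
      mul_sub, ← integral_const_mul, ← integral_const_mul, sub_nonneg]
    refine integral_mono_measure hle ?_
      ((integrable_pow_mul_exp_of_mem_interior_integrableExpSet (hF.mem_interior hx) m).const_mul _)
    have : ∀ᵐ t ∂μ, t ∉ Iic (0 : ℝ) := measure_eq_zero_iff_ae_notMem.1 hsupp
    filter_upwards [this] with t ht
    have ht' : 0 < t := by simpa using ht
    rw [← mul_assoc, ← mul_pow]
    simp only [Pi.zero_apply]
    have : (-1 : ℝ) * -t = t := by ring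
    rw [this]
    positivity

lemma IsLaplace.cm {μ : Measure ℝ} {F : ℝ → ℝ} (hF : IsLaplace μ F) (hsupp : μ (Iic 0) = 0) :
    CompletelyMonotonicOn F := by
  have h0 : IsLaplace (0 : Measure ℝ) (fun _ => 0) := ⟨fun _ _ => le_rfl, by simp⟩
  simpa using hF.sub h0 (Measure.zero_le _) hsupp

lemma IsLaplace.conv {μ ν : Measure ℝ} [SFinite ν] {F G : ℝ → ℝ} (hF : IsLaplace μ F)
    (hG : IsLaplace ν G) : IsLaplace (μ.conv ν) (fun x => F x * G x) := by
  refine ⟨fun x hx => mul_nonneg (hF.nonneg x hx) (hG.nonneg x hx), fun x hx => ?_⟩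
  rw [Measure.lintegral_conv (by fun_prop)]
  have : ∀ s t : ℝ, ENNReal.ofReal (exp (-(x * (s + t)))) =
      ENNReal.ofReal (exp (-(x * s))) * ENNReal.ofReal (exp (-(x * t))) := fun s t => by
    rw [← ENNReal.ofReal_mul (exp_pos _).le, ← exp_add]; ring_nf
  simp_rw [this]
  rw [lintegral_congr fun s => lintegral_const_mul _ (by fun_prop),
    lintegral_mul_const _ (by fun_prop), hF.eq x hx, hG.eq x hx,
    ENNReal.ofReal_mul (hF.nonneg x hx)]


/-! ### Gamma weights and a Chebyshev inequality -/

/-- The density `t ^ (a - 1) / Γ(a)` on `(0, ∞)`, extended by `0`. -/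
noncomputable def gden (a t : ℝ) : ℝ≥0∞ :=
  if 0 < t then ENNReal.ofReal (t ^ (a - 1) / Gamma a) else 0

@[fun_prop]
lemma measurable_gden (a : ℝ) : Measurable (gden a) :=
  Measurable.ite measurableSet_Ioi (by fun_prop) (by fun_prop)

lemma lintegral_gden_exp {a x : ℝ} (ha : 0 < a) (hx : 0 < x) :
    ∫⁻ t, gden a t * ENNReal.ofReal (exp (-(x * t))) = ENNReal.ofReal (x ^ (-a)) := by
  have h := lintegral_gammaPDF_eq_one ha hx
  have h2 : ∀ᵐ t : ℝ, gden a t * ENNReal.ofReal (exp (-(x * t)))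
      = ENNReal.ofReal (x ^ (-a)) * gammaPDF a x t := by
    have h0 : ∀ᵐ t : ℝ, t ≠ 0 := by simp [ae_iff]
    filter_upwards [h0] with t ht
    rcases lt_or_gt_of_ne ht with ht | ht
    · simp [gden, not_lt.2 ht.le, gammaPDF_of_neg ht]
    · rw [gden, if_pos ht, gammaPDF_of_nonneg ht.le, ← ENNReal.ofReal_mul (by positivity),
        ← ENNReal.ofReal_mul (by positivity)]
      congr 1
      rw [rpow_neg hx.le]
      field_simp
  rw [lintegral_congr_ae h2, lintegral_const_mul' _ _ ENNReal.ofReal_ne_top, h, mul_one]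

lemma lintegral_scale {s : ℝ} (hs : 0 < s) {f : ℝ → ℝ≥0∞} (hf : Measurable f) :
    ∫⁻ y, f y = ENNReal.ofReal s * ∫⁻ v, f (s * v) := by
  conv_lhs => rw [← Real.smul_map_volume_mul_left hs.ne']
  rw [lintegral_smul_measure, lintegral_map hf (by fun_prop), abs_of_pos hs, smul_eq_mul]

/-- The gamma densities form a convolution semigroup (the Beta integral). -/
lemma gden_conv {a b s : ℝ} (ha : 0 < a) (hb : 0 < b) (hs : 0 < s) :
    (gden a ⋆ₗ gden b) s = ENNReal.ofReal (s ^ (a + b - 1) / Gamma (a + b)) := by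
  rw [lconvolution_def, lintegral_scale hs (by fun_prop)]
  have h : ∀ v, gden a (s * v) * gden b (-(s * v) + s)
      = ENNReal.ofReal (s ^ (a + b - 2) / Gamma (a + b)) * betaPDF a b v := by
    intro v
    by_cases hv0 : 0 < v
    · by_cases hv1 : v < 1
      · have h1 : -(s * v) + s = s * (1 - v) := by ring
        have h2 : 0 < 1 - v := by linarith
        rw [h1, gden, gden, if_pos (by positivity), if_pos (by positivity),
          betaPDF_of_pos_lt_one hv0 hv1, ← ENNReal.ofReal_mul (by positivity),
          ← ENNReal.ofReal_mul (by positivity)]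
        congr 1
        rw [mul_rpow hs.le hv0.le, mul_rpow hs.le h2.le, beta,
          show a + b - 2 = (a - 1) + (b - 1) by ring, rpow_add hs]
        have := (Gamma_pos_of_pos (add_pos ha hb)).ne'
        have := (Gamma_pos_of_pos ha).ne'
        have := (Gamma_pos_of_pos hb).ne'
        field_simp
      · rw [betaPDF_eq_zero_of_one_le (not_lt.1 hv1), gden, gden,
          if_neg (show ¬ 0 < -(s * v) + s by nlinarith)]
        simp
    · rw [betaPDF_eq_zero_of_nonpos (not_lt.1 hv0), gden,
        if_neg (show ¬ 0 < s * v by nlinarith)]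
      simp
  rw [lintegral_congr h, lintegral_const_mul' _ _ ENNReal.ofReal_ne_top,
    lintegral_betaPDF_eq_one ha hb, mul_one, ← ENNReal.ofReal_mul hs.le]
  congr 1
  rw [show a + b - 1 = (a + b - 2) + 1 by ring, rpow_add_one hs.ne']
  ring

/-- Chebyshev's integral inequality for two densities `f`, `g` of equal finite mass, in the form
obtained by integrating the pointwise inequality
`(f y * g z - g y * f z) * (K y - K z) ≥ 0`. -/
lemma chebyshev {f g K : ℝ → ℝ≥0∞} (hf : Measurable f) (hg : Measurable g) (hK : Measurable K)
    {M : ℝ≥0∞} (hM0 : M ≠ 0) (hM : M ≠ ∞) (hfM : ∫⁻ y, f y = M) (hgM : ∫⁻ y, g y = M)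
    (h : ∀ y z, g y * f z * K y + f y * g z * K z ≤ f y * g z * K y + g y * f z * K z) :
    ∫⁻ y, g y * K y ≤ ∫⁻ y, f y * K y := by
  have h1 : ∀ y, g y * K y * M + f y * ∫⁻ z, g z * K z ≤
      f y * K y * M + g y * ∫⁻ z, f z * K z := by
    intro y
    have := lintegral_mono (μ := volume) (h y)
    have e1 : ∫⁻ z, (g y * f z * K y + f y * g z * K z) =
        g y * K y * M + f y * ∫⁻ z, g z * K z := by
      rw [lintegral_add_left (by fun_prop), ← hfM, ← lintegral_const_mul _ (by fun_prop),
        ← lintegral_const_mul _ (by fun_prop)]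
      congr 1 <;> refine lintegral_congr fun z => by ring
    have e2 : ∫⁻ z, (f y * g z * K y + g y * f z * K z) =
        f y * K y * M + g y * ∫⁻ z, f z * K z := by
      rw [lintegral_add_left (by fun_prop), ← hgM, ← lintegral_const_mul _ (by fun_prop),
        ← lintegral_const_mul _ (by fun_prop)]
      congr 1 <;> refine lintegral_congr fun z => by ring
    rwa [e1, e2] at this
  have h2 := lintegral_mono (μ := volume) h1
  rw [lintegral_add_left (by fun_prop), lintegral_add_left (by fun_prop),
    lintegral_mul_const _ (by fun_prop), lintegral_mul_const _ (by fun_prop),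
    lintegral_mul_const _ (by fun_prop), lintegral_mul_const _ (by fun_prop), hfM, hgM,
    mul_comm M, mul_comm M, ← mul_two, ← mul_two, mul_assoc, mul_assoc] at h2
  have hM2 : M * 2 ≠ 0 := by simp [hM0]
  have hM3 : M * 2 ≠ ∞ := ENNReal.mul_ne_top hM (by simp)
  exact (ENNReal.mul_le_mul_iff_left hM2 hM3).1 h2

/-- `(e, τ) ↦ cosh (e * τ)` is totally positive of order two in `(|e|, |τ|)`. Applied to the
symmetrised weights of `rpow_symm_eq`, with `e` the difference of the exponents, it gives
`symW_cross`. -/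
lemma cosh_mul_cosh_le {e e' τ σ : ℝ} (he : e ^ 2 ≤ e' ^ 2) (hτ : τ ^ 2 ≤ σ ^ 2) :
    cosh (e' * τ) * cosh (e * σ) ≤ cosh (e * τ) * cosh (e' * σ) := by
  have h1 : cosh (e' * τ + e * σ) ≤ cosh (e * τ + e' * σ) := by
    rw [cosh_le_cosh, ← sq_le_sq]
    nlinarith [mul_nonneg (sub_nonneg.2 he) (sub_nonneg.2 hτ)]
  have h2 : cosh (e' * τ - e * σ) ≤ cosh (e * τ - e' * σ) := by
    rw [cosh_le_cosh, ← sq_le_sq]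
    nlinarith [mul_nonneg (sub_nonneg.2 he) (sub_nonneg.2 hτ)]
  rw [cosh_add, cosh_add] at h1
  rw [cosh_sub, cosh_sub] at h2
  linarith

/-- The symmetrised weight is a power of `u * v` times a hyperbolic cosine of
`(a - b) * log (u / v) / 2`. -/
lemma rpow_symm_eq {a b u v : ℝ} (hu : 0 < u) (hv : 0 < v) :
    u ^ (a - 1) * v ^ (b - 1) + u ^ (b - 1) * v ^ (a - 1) =
      2 * exp (((a + b) / 2 - 1) * (log u + log v)) *
        cosh ((a - b) * ((log u - log v) / 2)) := by
  rw [cosh_eq, rpow_def_of_pos hu, rpow_def_of_pos hv, rpow_def_of_pos hu, rpow_def_of_pos hv,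
    ← exp_add, ← exp_add]
  have : ∀ A B C : ℝ, 2 * exp A * ((exp B + exp C) / 2) = exp (A + B) + exp (A + C) := by
    intro A B C; rw [exp_add, exp_add]; ring
  rw [this]
  congr 2 <;> ring

lemma sq_log_le {s y z : ℝ} (hy : 0 < y) (hys : y < s) (hz : 0 < z) (hzs : z < s)
    (h : |2 * y - s| ≤ |2 * z - s|) :
    ((log y - log (s - y)) / 2) ^ 2 ≤ ((log z - log (s - z)) / 2) ^ 2 := by
  have hy' : 0 < s - y := by linarith
  have hz' : 0 < s - z := by linarith
  have hc : ∀ w, 0 < w → 0 < s - w →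
      cosh (log w - log (s - w)) = s ^ 2 / (2 * (w * (s - w))) - 1 := by
    intro w h1 h2
    rw [cosh_eq, neg_sub, exp_sub, exp_sub, exp_log h1, exp_log h2]
    field_simp
    ring
  have : |log y - log (s - y)| ≤ |log z - log (s - z)| := by
    rw [← cosh_le_cosh, hc y hy hy', hc z hz hz']
    have hsq := sq_le_sq.2 h
    have hzy : z * (s - z) ≤ y * (s - y) := by nlinarith
    exact sub_le_sub_right (div_le_div_of_nonneg_left (by positivity) (by positivity)
      (by linarith)) 1
  have := sq_le_sq.2 this
  linarith

/-- The integrand of the convolution `gden a ⋆ₗ gden b` at `s`, symmetrised under `y ↦ s - y`. -/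
noncomputable def symW (a b s y : ℝ) : ℝ≥0∞ :=
  gden a y * gden b (-y + s) + gden b y * gden a (-y + s)

@[fun_prop]
lemma measurable_symW (a b s : ℝ) : Measurable (symW a b s) := by
  unfold symW; fun_prop

lemma symW_eq_zero {a b s y : ℝ} (h : ¬ (0 < y ∧ y < s)) : symW a b s y = 0 := by
  by_cases h0 : 0 < y
  · have : ¬ 0 < -y + s := fun h' => h ⟨h0, by linarith⟩
    simp [symW, gden, this]
  · simp [symW, gden, h0]

lemma symW_eq {a b s y : ℝ} (ha : 0 < a) (hb : 0 < b) (hy : 0 < y) (hys : y < s) :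
    symW a b s y = ENNReal.ofReal (2 / (Gamma a * Gamma b) *
      exp (((a + b) / 2 - 1) * (log y + log (s - y))) *
        cosh ((a - b) * ((log y - log (s - y)) / 2))) := by
  have hsy : 0 < s - y := by linarith
  have hc := cosh_pos ((a - b) * ((log y - log (s - y)) / 2))
  rw [symW, show -y + s = s - y by ring, gden, gden, gden, gden, if_pos hy, if_pos hsy, if_pos hy,
    if_pos hsy, ← ENNReal.ofReal_mul (by positivity), ← ENNReal.ofReal_mul (by positivity),
    ← ENNReal.ofReal_add (by positivity) (by positivity)]
  congr 1
  have h := rpow_symm_eq (a := a) (b := b) hy hsy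
  have := (Gamma_pos_of_pos ha).ne'
  have := (Gamma_pos_of_pos hb).ne'
  rw [div_mul_div_comm, div_mul_div_comm, mul_comm (Gamma b), ← add_div, h]
  ring

/-- Monotone likelihood ratio: the less spread pair `(a, b)` puts relatively more weight near the
midpoint `s / 2` than `(c, d)` does. -/
lemma symW_cross {a b c d s y z : ℝ} (hdb : d ≤ b) (hba : b ≤ a) (hac : a ≤ c) (hd : 0 < d)
    (hsum : a + b = c + d) (hy : 0 < y) (hys : y < s) (hz : 0 < z) (hzs : z < s)
    (h : |2 * y - s| ≤ |2 * z - s|) :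
    symW c d s y * symW a b s z ≤ symW a b s y * symW c d s z := by
  have hb : 0 < b := by linarith
  have ha : 0 < a := by linarith
  have hc : 0 < c := by linarith
  have c1 := cosh_pos ((a - b) * ((log y - log (s - y)) / 2))
  have c2 := cosh_pos ((c - d) * ((log y - log (s - y)) / 2))
  rw [symW_eq hc hd hy hys, symW_eq ha hb hy hys, symW_eq hc hd hz hzs, symW_eq ha hb hz hzs,
    ← ENNReal.ofReal_mul (by positivity), ← ENNReal.ofReal_mul (by positivity), hsum]
  apply ENNReal.ofReal_le_ofReal
  have key := cosh_mul_cosh_le (e := a - b) (e' := c - d) (by nlinarith)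
    (sq_log_le hy hys hz hzs h)
  set X := exp (((c + d) / 2 - 1) * (log y + log (s - y)))
  set Y := exp (((c + d) / 2 - 1) * (log z + log (s - z)))
  have hP : 0 ≤ 2 / (Gamma c * Gamma d) * (2 / (Gamma a * Gamma b)) * X * Y := by positivity
  have := mul_le_mul_of_nonneg_left key hP
  linarith

lemma lintegral_symW {a b s : ℝ} : ∫⁻ y, symW a b s y = 2 * (gden a ⋆ₗ gden b) s := by
  unfold symW
  rw [lintegral_add_left (by fun_prop), ← lconvolution_def, ← lconvolution_def,
    lconvolution_comm (f := gden b), two_mul]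

/-- The density `k t * t ^ (a - 1) / Γ(a)` on `(0, ∞)`. -/
noncomputable def fden (k : ℝ → ℝ) (a t : ℝ) : ℝ≥0∞ := gden a t * ENNReal.ofReal (k t)

lemma measurable_fden {k : ℝ → ℝ} (hk : Measurable k) (a : ℝ) : Measurable (fden k a) := by
  unfold fden; fun_prop

lemma lintegral_symW_mul {k : ℝ → ℝ} (hk : Measurable k) {a b s : ℝ} :
    ∫⁻ y, symW a b s y * (ENNReal.ofReal (k y) * ENNReal.ofReal (k (-y + s)))
      = 2 * (fden k a ⋆ₗ fden k b) s := by
  have e : ∀ y, symW a b s y * (ENNReal.ofReal (k y) * ENNReal.ofReal (k (-y + s)))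
      = fden k a y * fden k b (-y + s) + fden k b y * fden k a (-y + s) := by
    intro y; simp only [symW, fden]; ring
  have := measurable_fden hk a
  have := measurable_fden hk b
  rw [lintegral_congr e, lintegral_add_left (by fun_prop), ← lconvolution_def, ← lconvolution_def,
    lconvolution_comm (f := fden k b), two_mul]

lemma rearrange {A B C D : ℝ≥0∞} (hBA : B ≤ A) (hDC : D ≤ C) :
    B * C + A * D ≤ A * C + B * D := by
  obtain ⟨e, rfl⟩ := exists_add_of_le hBA
  obtain ⟨f, rfl⟩ := exists_add_of_le hDC
  calc B * (D + f) + (B + e) * D ≤ B * (D + f) + (B + e) * D + e * f := le_self_add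
    _ = _ := by ring

lemma gden_conv_total {a b c d s : ℝ} (ha : 0 < a) (hb : 0 < b) (hc : 0 < c) (hd : 0 < d)
    (hsum : a + b = c + d) (hs : 0 < s) :
    2 * (gden a ⋆ₗ gden b) s = 2 * (gden c ⋆ₗ gden d) s ∧ 2 * (gden c ⋆ₗ gden d) s ≠ 0 ∧
      2 * (gden c ⋆ₗ gden d) s ≠ ∞ := by
  rw [gden_conv ha hb hs, gden_conv hc hd hs, hsum]
  refine ⟨rfl, ?_, ENNReal.mul_ne_top (by simp) ENNReal.ofReal_ne_top⟩
  have : 0 < s ^ (c + d - 1) / Gamma (c + d) := by positivity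
  simp [this]

lemma fden_conv_zero {k : ℝ → ℝ} (hk : Measurable k) {a b s : ℝ} (hs : ¬ 0 < s) :
    (fden k a ⋆ₗ fden k b) s = 0 := by
  have h2 := lintegral_symW_mul hk (a := a) (b := b) (s := s)
  have h0 : ∀ y, symW a b s y = 0 := fun y => symW_eq_zero fun h => hs (h.1.trans h.2)
  simp only [h0, zero_mul, lintegral_zero] at h2
  simpa using h2.symm

/-- If `k y * k (s - y)` increases towards the midpoint, the convolution of the densities is larger
for the less spread exponents. -/
lemma fden_conv_le {k : ℝ → ℝ} (hk : Measurable k) (hk0 : ∀ t, 0 < t → 0 ≤ k t)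
    (hK : ∀ s y z, 0 < y → y < s → 0 < z → z < s → |2 * y - s| ≤ |2 * z - s| →
      k z * k (s - z) ≤ k y * k (s - y))
    {a b c d : ℝ} (hdb : d ≤ b) (hba : b ≤ a) (hac : a ≤ c) (hd : 0 < d)
    (hsum : a + b = c + d) (s : ℝ) :
    (fden k c ⋆ₗ fden k d) s ≤ (fden k a ⋆ₗ fden k b) s := by
  by_cases hs : 0 < s
  swap
  · simp [fden_conv_zero hk hs]
  have hb : 0 < b := by linarith
  have ha : 0 < a := by linarith
  have hc : 0 < c := by linarith
  obtain ⟨h1, h2, h3⟩ := gden_conv_total ha hb hc hd hsum hs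
  have := chebyshev (f := symW a b s) (g := symW c d s)
    (K := fun y => ENNReal.ofReal (k y) * ENNReal.ofReal (k (-y + s)))
    (by fun_prop) (by fun_prop) (by fun_prop) h2 h3 (by rw [lintegral_symW, h1]) lintegral_symW ?_
  · rw [lintegral_symW_mul hk, lintegral_symW_mul hk] at this
    exact (ENNReal.mul_le_mul_iff_right (by simp) (by simp)).1 this
  intro y z
  by_cases hy : 0 < y ∧ y < s
  swap
  · simp [symW_eq_zero hy]
  by_cases hz : 0 < z ∧ z < s
  swap
  · simp [symW_eq_zero hz]
  simp only [← ENNReal.ofReal_mul (hk0 _ hy.1), ← ENNReal.ofReal_mul (hk0 _ hz.1), neg_add_eq_sub]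
  rcases le_total |2 * y - s| |2 * z - s| with h | h
  · exact rearrange (symW_cross hdb hba hac hd hsum hy.1 hy.2 hz.1 hz.2 h)
      (ENNReal.ofReal_le_ofReal (hK s y z hy.1 hy.2 hz.1 hz.2 h))
  · have := rearrange (symW_cross hdb hba hac hd hsum hz.1 hz.2 hy.1 hy.2 h)
      (ENNReal.ofReal_le_ofReal (hK s z y hz.1 hz.2 hy.1 hy.2 h))
    calc _ = _ := by ring
      _ ≤ _ := this
      _ = _ := by ring

/-- If `k y * k (s - y)` decreases towards the midpoint, the convolution of the densities is smaller
for the less spread exponents. -/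
lemma fden_conv_ge {k : ℝ → ℝ} (hk : Measurable k) (hk0 : ∀ t, 0 < t → 0 ≤ k t)
    (hK : ∀ s y z, 0 < y → y < s → 0 < z → z < s → |2 * y - s| ≤ |2 * z - s| →
      k y * k (s - y) ≤ k z * k (s - z))
    {a b c d : ℝ} (hdb : d ≤ b) (hba : b ≤ a) (hac : a ≤ c) (hd : 0 < d)
    (hsum : a + b = c + d) (s : ℝ) :
    (fden k a ⋆ₗ fden k b) s ≤ (fden k c ⋆ₗ fden k d) s := by
  by_cases hs : 0 < s
  swap
  · simp [fden_conv_zero hk hs]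
  have hb : 0 < b := by linarith
  have ha : 0 < a := by linarith
  have hc : 0 < c := by linarith
  obtain ⟨h1, h2, h3⟩ := gden_conv_total ha hb hc hd hsum hs
  have := chebyshev (f := symW c d s) (g := symW a b s)
    (K := fun y => ENNReal.ofReal (k y) * ENNReal.ofReal (k (-y + s)))
    (by fun_prop) (by fun_prop) (by fun_prop) h2 h3 lintegral_symW (by rw [lintegral_symW, h1]) ?_
  · rw [lintegral_symW_mul hk, lintegral_symW_mul hk] at this
    exact (ENNReal.mul_le_mul_iff_right (by simp) (by simp)).1 this
  intro y z
  by_cases hy : 0 < y ∧ y < s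
  swap
  · simp [symW_eq_zero hy]
  by_cases hz : 0 < z ∧ z < s
  swap
  · simp [symW_eq_zero hz]
  simp only [← ENNReal.ofReal_mul (hk0 _ hy.1), ← ENNReal.ofReal_mul (hk0 _ hz.1), neg_add_eq_sub]
  rcases le_total |2 * y - s| |2 * z - s| with h | h
  · have := rearrange (symW_cross hdb hba hac hd hsum hy.1 hy.2 hz.1 hz.2 h)
      (ENNReal.ofReal_le_ofReal (hK s y z hy.1 hy.2 hz.1 hz.2 h))
    calc _ = _ := by ring
      _ ≤ _ := this
      _ = _ := by ring
  · have := rearrange (symW_cross hdb hba hac hd hsum hz.1 hz.2 hy.1 hy.2 h)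
      (ENNReal.ofReal_le_ofReal (hK s z y hz.1 hz.2 hy.1 hy.2 h))
    calc _ = _ := by ring
      _ ≤ _ := this
      _ = _ := by ring

/-! ### The two kernels -/

/-- The kernel `1 / (1 - exp (-t))`, for which `fden kA p` has Laplace transform `ζ(p, ·)`. -/
noncomputable def kA (t : ℝ) : ℝ := 1 / (1 - exp (-t))

/-- The kernel `t / (1 - exp (-t))`, for which `fden kB (p - 1)` has Laplace transform
`(p - 1) ζ(p, ·)`. -/
noncomputable def kB (t : ℝ) : ℝ := t / (1 - exp (-t))

lemma measurable_kA : Measurable kA := by unfold kA; fun_prop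

lemma measurable_kB : Measurable kB := by unfold kB; fun_prop

lemma one_sub_exp_neg_pos {t : ℝ} (ht : 0 < t) : 0 < 1 - exp (-t) := by
  have : exp (-t) < 1 := by simpa using ht
  linarith

lemma kA_nonneg {t : ℝ} (ht : 0 < t) : 0 ≤ kA t := by
  have := one_sub_exp_neg_pos ht
  unfold kA; positivity

lemma kB_nonneg {t : ℝ} (ht : 0 < t) : 0 ≤ kB t := by
  have := one_sub_exp_neg_pos ht
  unfold kB; positivity

lemma one_sub_exp_mul (s y : ℝ) : (1 - exp (-y)) * (1 - exp (-(s - y))) =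
    2 * exp (-(s / 2)) * (cosh (s / 2) - cosh (y - s / 2)) := by
  rw [cosh_eq, cosh_eq]
  have e1 : exp (-(s / 2)) * exp (s / 2) = 1 := by rw [← exp_add]; simp
  have e2 : exp (-(s / 2)) * exp (-(s / 2)) = exp (-s) := by rw [← exp_add]; ring_nf
  have e3 : exp (-(s / 2)) * exp (y - s / 2) = exp (-(s - y)) := by rw [← exp_add]; ring_nf
  have e4 : exp (-(s / 2)) * exp (-(y - s / 2)) = exp (-y) := by rw [← exp_add]; ring_nf
  have e5 : exp (-y) * exp (-(s - y)) = exp (-s) := by rw [← exp_add]; ring_nf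
  linear_combination e5 - e1 - e2 + e3 + e4

lemma cosh_mid_lt {s y : ℝ} (hy : 0 < y) (hys : y < s) : cosh (y - s / 2) < cosh (s / 2) := by
  rw [cosh_lt_cosh, abs_of_pos (show 0 < s / 2 by linarith), abs_lt]
  constructor <;> linarith

lemma cosh_mid_le {s y z : ℝ} (h : |2 * y - s| ≤ |2 * z - s|) :
    cosh (y - s / 2) ≤ cosh (z - s / 2) := by
  rw [cosh_le_cosh, ← sq_le_sq]
  have := sq_le_sq.2 h
  linarith

/-- `kA` is log-convex, in the form used by `fden_conv_ge`. -/
lemma kA_mul_le {s y z : ℝ} (hz : 0 < z) (hzs : z < s)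
    (h : |2 * y - s| ≤ |2 * z - s|) : kA y * kA (s - y) ≤ kA z * kA (s - z) := by
  unfold kA
  rw [div_mul_div_comm, div_mul_div_comm, one_sub_exp_mul, one_sub_exp_mul]
  have h1 := cosh_mid_lt hz hzs
  have h2 := cosh_mid_le h
  have h3 : 0 < cosh (s / 2) - cosh (z - s / 2) := by linarith
  gcongr

/-- `cosh (√y) = ∑ yⁿ / (2n)!` is a sum of convex functions. -/
lemma convexOn_cosh_sqrt : ConvexOn ℝ (Ici 0) (fun y => cosh √y) := by
  have hsum : ∀ y : ℝ, 0 ≤ y → HasSum (fun n : ℕ => y ^ n / ((2 * n).factorial : ℝ)) (cosh √y) := by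
    intro y hy
    have := hasSum_cosh √y
    simpa only [pow_mul, sq_sqrt hy] using this
  refine ⟨convex_Ici 0, fun x hx y hy a b ha hb hab => ?_⟩
  have hx' : 0 ≤ x := hx
  have hy' : 0 ≤ y := hy
  have h0 : 0 ≤ a • x + b • y := by simp only [smul_eq_mul]; positivity
  refine hasSum_le (fun n => ?_) (hsum _ h0) (((hsum x hx).mul_left a).add ((hsum y hy).mul_left b))
  have := (convexOn_pow (𝕜 := ℝ) n).2 hx hy ha hb hab
  simp only [smul_eq_mul] at this ⊢
  calc _ ≤ (a * x ^ n + b * y ^ n) / ((2 * n).factorial : ℝ) := by gcongr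
    _ = _ := by ring

/-- `kB` is log-concave, in the form used by `fden_conv_le`. With `w = (y - s / 2) ^ 2`, the product
`kB y * kB (s - y)` is, up to a factor depending on `s` only, the inverse of a secant slope of
`cosh √w` at `(s / 2) ^ 2`, and slopes of a convex function increase. -/
lemma kB_mul_le {s y z : ℝ} (hy : 0 < y) (hys : y < s) (hz : 0 < z) (hzs : z < s)
    (h : |2 * y - s| ≤ |2 * z - s|) : kB z * kB (s - z) ≤ kB y * kB (s - y) := by
  unfold kB
  rw [div_mul_div_comm, div_mul_div_comm, one_sub_exp_mul, one_sub_exp_mul]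
  have h1 := cosh_mid_lt hz hzs
  have h1' := cosh_mid_lt hy hys
  have hsq := sq_le_sq.2 h
  have hs : 0 < s / 2 := by linarith
  have key := convexOn_cosh_sqrt.secant_mono (a := (s / 2) ^ 2) (x := (y - s / 2) ^ 2)
    (y := (z - s / 2) ^ 2) (mem_Ici.2 (sq_nonneg _)) (mem_Ici.2 (sq_nonneg _))
    (mem_Ici.2 (sq_nonneg _)) (by nlinarith)
    (by nlinarith) (by nlinarith)
  simp only [sqrt_sq_eq_abs, cosh_abs] at key
  have e1 : (y - s / 2) ^ 2 - (s / 2) ^ 2 = -(y * (s - y)) := by ring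
  have e2 : (z - s / 2) ^ 2 - (s / 2) ^ 2 = -(z * (s - z)) := by ring
  have py : 0 < y * (s - y) := mul_pos hy (by linarith)
  have pz : 0 < z * (s - z) := mul_pos hz (by linarith)
  rw [e1, e2, div_neg, div_neg, ← neg_div, ← neg_div, neg_sub, neg_sub, div_le_div_iff₀ py pz]
    at key
  have d1 : 0 < cosh (s / 2) - cosh (z - s / 2) := by linarith
  have d2 : 0 < cosh (s / 2) - cosh (y - s / 2) := by linarith
  rw [div_le_div_iff₀ (by positivity) (by positivity)]
  have := mul_le_mul_of_nonneg_left key (show 0 ≤ 2 * exp (-(s / 2)) by positivity)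
  linarith

lemma one_le_kB {t : ℝ} (ht : 0 < t) : 1 ≤ kB t := by
  unfold kB
  rw [le_div_iff₀ (one_sub_exp_neg_pos ht)]
  linarith [add_one_le_exp (-t)]

lemma kB_le {t : ℝ} (ht : 0 < t) : kB t ≤ 1 + t := by
  unfold kB
  rw [div_le_iff₀ (one_sub_exp_neg_pos ht)]
  have h1 : exp t * exp (-t) = 1 := by rw [← exp_add]; simp
  have h2 := mul_le_mul_of_nonneg_right (add_one_le_exp t) (exp_pos (-t)).le
  linarith

/-! ### The Hurwitz zeta function as a Laplace transform -/

lemma summable_hzeta {p x : ℝ} (hp : 1 < p) (hx : 0 < x) :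
    Summable (fun k : ℕ => ((k : ℝ) + x) ^ (-p)) := by
  refine ((Real.summable_one_div_nat_add_rpow x p).2 hp).congr fun k => ?_
  have : 0 < (k : ℝ) + x := by positivity
  rw [abs_of_pos this, rpow_neg this.le, one_div]

lemma hzeta_pos {p x : ℝ} (hp : 1 < p) (hx : 0 < x) : 0 < hzeta p x :=
  (summable_hzeta hp hx).tsum_pos (fun k => by positivity) 0 (by positivity)

/-- The measure with density `k t * t ^ (a - 1) / Γ(a)` on `(0, ∞)`. -/
noncomputable def kmeas (k : ℝ → ℝ) (a : ℝ) : Measure ℝ := volume.withDensity (fden k a)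

instance (k : ℝ → ℝ) (a : ℝ) : SFinite (kmeas k a) := by unfold kmeas; infer_instance

lemma lintegral_kmeas {k : ℝ → ℝ} (hk : Measurable k) (a x : ℝ) :
    ∫⁻ t, ENNReal.ofReal (exp (-(x * t))) ∂kmeas k a =
      ∫⁻ t, fden k a t * ENNReal.ofReal (exp (-(x * t))) := by
  unfold kmeas
  rw [lintegral_withDensity_eq_lintegral_mul _ (measurable_fden hk a) (by fun_prop)]
  rfl

/-- Expand `1 / (1 - exp (-t))` as a geometric series and integrate term by term. -/
lemma isLaplace_kA {p : ℝ} (hp : 1 < p) : IsLaplace (kmeas kA p) (hzeta p) := by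
  refine ⟨fun x hx => (hzeta_pos hp hx).le, fun x hx => ?_⟩
  have h : ∀ t, fden kA p t * ENNReal.ofReal (exp (-(x * t))) =
      ∑' k : ℕ, gden p t * ENNReal.ofReal (exp (-(((k : ℝ) + x) * t))) := by
    intro t
    by_cases ht : 0 < t
    · have hg := hasSum_geometric_of_lt_one (exp_pos (-t)).le 
        (show exp (-t) < 1 by simpa using ht)
      have e : ENNReal.ofReal (kA t) = ∑' k : ℕ, ENNReal.ofReal (exp (-t) ^ k) := by
        rw [kA, one_div, ← hg.tsum_eq, ENNReal.ofReal_tsum_of_nonneg (fun k => by positivity)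
          hg.summable]
      rw [fden, e, mul_assoc, ← ENNReal.tsum_mul_right, ← ENNReal.tsum_mul_left]
      refine tsum_congr fun k => ?_
      rw [← ENNReal.ofReal_mul (by positivity), ← exp_nat_mul, ← exp_add]
      ring_nf
    · simp [fden, gden, ht]
  rw [lintegral_kmeas measurable_kA, lintegral_congr h, lintegral_tsum fun k => by fun_prop, hzeta,
    ENNReal.ofReal_tsum_of_nonneg (fun k => by positivity) (summable_hzeta hp hx)]
  exact tsum_congr fun k => lintegral_gden_exp (by linarith) (by positivity)

lemma gden_sub_one {p t : ℝ} (hp : 1 < p) :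
    gden (p - 1) t * ENNReal.ofReal t = ENNReal.ofReal (p - 1) * gden p t := by
  by_cases ht : 0 < t
  · have hp' : 0 < p - 1 := by linarith
    rw [gden, gden, if_pos ht, if_pos ht, ← ENNReal.ofReal_mul (by positivity),
      ← ENNReal.ofReal_mul (by positivity)]
    congr 1
    have h1 := Gamma_add_one hp'.ne'
    rw [sub_add_cancel] at h1
    have h2 := rpow_sub_one ht.ne' (p - 1)
    have := (Gamma_pos_of_pos hp').ne'
    rw [h1, h2]
    field_simp
  · simp [gden, ht]

lemma fden_kB {p : ℝ} (hp : 1 < p) (t : ℝ) :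
    fden kB (p - 1) t = ENNReal.ofReal (p - 1) * fden kA p t := by
  by_cases ht : 0 < t
  · have : kB t = t * kA t := by simp [kA, kB, div_eq_mul_inv]
    rw [fden, fden, this, ENNReal.ofReal_mul ht.le, ← mul_assoc, gden_sub_one hp, mul_assoc]
  · simp [fden, gden, ht]

lemma isLaplace_kB {p : ℝ} (hp : 1 < p) :
    IsLaplace (kmeas kB (p - 1)) (fun x => (p - 1) * hzeta p x) := by
  have hp' : 0 < p - 1 := by linarith
  refine ⟨fun x hx => (mul_pos hp' (hzeta_pos hp hx)).le, fun x hx => ?_⟩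
  have h := (isLaplace_kA hp).eq x hx
  rw [lintegral_kmeas measurable_kA] at h
  simp_rw [lintegral_kmeas measurable_kB, fden_kB hp, mul_assoc]
  rw [lintegral_const_mul' _ _ ENNReal.ofReal_ne_top, h, ENNReal.ofReal_mul hp'.le]

lemma withDensity_Iic {f : ℝ → ℝ≥0∞} (hf : ∀ t, ¬ 0 < t → f t = 0) :
    (volume.withDensity f) (Iic 0) = 0 := by
  rw [withDensity_apply _ measurableSet_Iic,
    setLIntegral_eq_zero measurableSet_Iic fun t ht => hf t (not_lt.2 ht)]

lemma kmeas_Iic (k : ℝ → ℝ) (a : ℝ) : kmeas k a (Iic 0) = 0 :=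
  withDensity_Iic fun t ht => by simp [fden, gden, ht]

lemma kmeas_conv {k : ℝ → ℝ} (hk : Measurable k) (a b : ℝ) :
    (kmeas k a).conv (kmeas k b) = volume.withDensity (fden k a ⋆ₗ fden k b) :=
  conv_withDensity_eq_lconvolution (measurable_fden hk a) (measurable_fden hk b)

lemma hzeta_cm {p : ℝ} (hp : 1 < p) : CompletelyMonotonicOn (hzeta p) :=
  (isLaplace_kA hp).cm (kmeas_Iic _ _)

/-- The two-variable case for the products `ζ(p, ·) ζ(q, ·)`: spreading the exponents increases. -/
lemma hzeta_pair {a b c d : ℝ} (hdb : d ≤ b) (hba : b ≤ a) (hac : a ≤ c) (hd : 1 < d)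
    (hsum : a + b = c + d) :
    CompletelyMonotonicOn (fun x => hzeta c x * hzeta d x - hzeta a x * hzeta b x) := by
  refine ((isLaplace_kA (by linarith)).conv (isLaplace_kA hd)).sub
    ((isLaplace_kA (by linarith)).conv (isLaplace_kA (by linarith))) ?_ ?_
  · rw [kmeas_conv measurable_kA, kmeas_conv measurable_kA]
    exact withDensity_mono (ae_of_all _ (fden_conv_ge measurable_kA (fun t => kA_nonneg)
      (fun s y z _ _ hz hzs h => kA_mul_le hz hzs h) hdb hba hac (by linarith) hsum))
  · rw [kmeas_conv measurable_kA]
    exact withDensity_Iic fun t ht => fden_conv_zero measurable_kA ht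

/-- The two-variable case for the normalised products `(p - 1) ζ(p, ·) (q - 1) ζ(q, ·)`: spreading
the exponents decreases. -/
lemma hzeta_pair' {a b c d : ℝ} (hdb : d ≤ b) (hba : b ≤ a) (hac : a ≤ c) (hd : 1 < d)
    (hsum : a + b = c + d) :
    CompletelyMonotonicOn (fun x => (a - 1) * hzeta a x * ((b - 1) * hzeta b x) -
      (c - 1) * hzeta c x * ((d - 1) * hzeta d x)) := by
  refine ((isLaplace_kB (by linarith)).conv (isLaplace_kB (by linarith))).sub
    ((isLaplace_kB (by linarith)).conv (isLaplace_kB hd)) ?_ ?_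
  · rw [kmeas_conv measurable_kB, kmeas_conv measurable_kB]
    exact withDensity_mono (ae_of_all _ (fden_conv_le measurable_kB (fun t => kB_nonneg)
      (fun s y z hy hys hz hzs h => kB_mul_le hy hys hz hzs h) (by linarith) (by linarith)
      (by linarith) (by linarith) (by linarith)))
  · rw [kmeas_conv measurable_kB]
    exact withDensity_Iic fun t ht => fden_conv_zero measurable_kB ht

/-! ### Reduction of majorization to two coordinates -/

/-- If the partial sums of `q` dominate those of `p` and the totals agree, then there are
coordinates `j < k` with `q j > p j` and `q k < p k`, and moving them towards each other by a
suitable `δ` makes one of them agree with `p`. The last clause says that the partial sums still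
dominate after the move. -/
lemma exists_transfer {n : ℕ} {p q : Fin n → ℝ}
    (hle : ∀ k : Fin n, ∑ j ∈ Finset.univ.filter (fun j => j ≤ k), p j ≤
      ∑ j ∈ Finset.univ.filter (fun j => j ≤ k), q j)
    (hsum : ∑ j, p j = ∑ j, q j) (hne : p ≠ q) :
    ∃ (j k : Fin n) (δ : ℝ), j < k ∧ 0 < δ ∧ δ ≤ q j - p j ∧ δ ≤ p k - q k ∧
      (δ = q j - p j ∨ δ = p k - q k) ∧
      ∀ i, j ≤ i → i < k → δ ≤ ∑ l ∈ Finset.univ.filter (fun l => l ≤ i), (q l - p l) := by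
  have hneg : ∃ k, q k < p k := by
    by_contra! h
    refine hne (funext fun i => ?_)
    exact (Finset.sum_eq_sum_iff_of_le (fun i _ => h i)).1 hsum i (Finset.mem_univ i)
  -- the first coordinate at which `q` falls below `p`
  obtain ⟨k, hk, hmin⟩ : ∃ k, q k < p k ∧ ∀ l, l < k → p l ≤ q l := by
    have hs : (Finset.univ.filter fun k => q k < p k).Nonempty :=
      hneg.imp fun k hk => by simpa using hk
    refine ⟨_, (Finset.mem_filter.1 (Finset.min'_mem _ hs)).2, fun l hl => ?_⟩
    by_contra! h
    exact absurd hl (not_lt.2 (Finset.min'_le _ l (by simpa using h)))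
  obtain ⟨j, hjk, hj⟩ : ∃ j, j < k ∧ p j < q j := by
    by_contra! h
    refine absurd (hle k) (not_le.2 (Finset.sum_lt_sum (fun l hl => ?_) ⟨k, by simp, hk⟩))
    rcases (Finset.mem_filter.1 hl).2.lt_or_eq with h1 | h1
    · exact h l h1
    · exact h1 ▸ hk.le
  refine ⟨j, k, min (q j - p j) (p k - q k), hjk, lt_min (by linarith) (by linarith),
    min_le_left _ _, min_le_right _ _, min_choice _ _, fun i hji hik => ?_⟩
  refine (min_le_left _ _).trans ?_
  refine Finset.single_le_sum (f := fun l => q l - p l) (fun l hl => ?_) (by simpa using hji)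
  exact sub_nonneg.2 (hmin l ((Finset.mem_filter.1 hl).2.trans_lt hik))

/-- To pass from `p` to a `q` that majorizes it, it suffices to treat one move of two coordinates
`a ≥ b` apart to `q j ≥ a` and `q k ≤ b` with the same sum. The induction is on the number of
coordinates at which `p` and `q` differ; the tuples in between need not be ordered, so only the
partial sums of `q` enter. -/
lemma majorization_induction {n : ℕ} {p : Fin n → ℝ} (hp : ∀ i j : Fin n, i ≤ j → p j ≤ p i)
    (R : (Fin n → ℝ) → Prop) (hrefl : R p)
    (hstep : ∀ (q : Fin n → ℝ) (j k : Fin n) (a b : ℝ), j ≠ k → (∀ i, 1 < q i) → q k ≤ b →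
      b ≤ a → a ≤ q j → a + b = q j + q k →
      R (Function.update (Function.update q j a) k b) → R q) :
    ∀ (N : ℕ) (q : Fin n → ℝ), (Finset.univ.filter fun i => p i ≠ q i).card ≤ N →
    (∀ i, 1 < q i) →
    (∀ k : Fin n, ∑ j ∈ Finset.univ.filter (fun j => j ≤ k), p j ≤
      ∑ j ∈ Finset.univ.filter (fun j => j ≤ k), q j) →
    ∑ j, p j = ∑ j, q j → R q := by
  intro N
  induction N with
  | zero =>
    intro q hN _ _ _
    have : p = q := by
      funext i
      by_contra h
      have : i ∈ (Finset.univ.filter fun i => p i ≠ q i) := by simpa using h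
      rw [Finset.card_eq_zero.1 (Nat.le_zero.1 hN)] at this
      simp at this
    exact this ▸ hrefl
  | succ N ih =>
    intro q hN hq hle hsum
    by_cases hne : p = q
    · exact hne ▸ hrefl
    obtain ⟨j, k, δ, hjk, hδ, hδj, hδk, hor, hpart⟩ := exists_transfer hle hsum hne
    have hpjk := hp j k hjk.le
    refine hstep q j k (q j - δ) (q k + δ) hjk.ne hq (by linarith) (by linarith) (by linarith)
      (by ring) ?_
    set q' := Function.update (Function.update q j (q j - δ)) k (q k + δ) with hq'
    have ek : q' k = q k + δ := by simp [hq']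
    have ej : q' j = q j - δ := by simp [hq', hjk.ne]
    have eo : ∀ i, i ≠ j → i ≠ k → q' i = q i := fun i h1 h2 => by simp [hq', h1, h2]
    have eform : ∀ i, q' i = q i - (if i = j then δ else 0) + (if i = k then δ else 0) := by
      intro i
      by_cases h1 : i = j
      · subst h1; simp [ej, hjk.ne]
      · by_cases h2 : i = k
        · subst h2; simp [ek, h1]
        · simp [h1, h2, eo i h1 h2]
    refine ih q' ?_ ?_ ?_ ?_
    · refine Nat.le_of_lt_succ (lt_of_lt_of_le (Finset.card_lt_card ?_) hN)
      have hj0 : p j ≠ q j := by intro h; linarith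
      have hk0 : p k ≠ q k := by intro h; linarith
      refine Finset.ssubset_iff_subset_ne.2 ⟨fun i hi => ?_, fun h => ?_⟩
      · simp only [Finset.mem_filter, Finset.mem_univ, true_and] at hi ⊢
        by_cases h1 : i = j
        · rwa [h1]
        · by_cases h2 : i = k
          · rwa [h2]
          · rwa [eo i h1 h2] at hi
      · rcases hor with h1 | h1
        · have : j ∈ (Finset.univ.filter fun i => p i ≠ q' i) := by rw [h]; simpa using hj0
          simp only [Finset.mem_filter, ej] at this
          exact this.2 (by linarith)
        · have : k ∈ (Finset.univ.filter fun i => p i ≠ q' i) := by rw [h]; simpa using hk0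
          simp only [Finset.mem_filter, ek] at this
          exact this.2 (by linarith)
    · intro i
      by_cases h1 : i = j
      · rw [h1, ej]; linarith [hq k]
      · by_cases h2 : i = k
        · rw [h2, ek]; linarith [hq k]
        · rw [eo i h1 h2]; exact hq i
    · intro i
      simp_rw [eform, Finset.sum_add_distrib, Finset.sum_sub_distrib, Finset.sum_ite_eq',
        Finset.mem_filter, Finset.mem_univ, true_and]
      have h0 := hle i
      by_cases h1 : j ≤ i
      · by_cases h2 : k ≤ i
        · simp [h1, h2, h0]
        · have := hpart i h1 (not_le.1 h2)
          rw [Finset.sum_sub_distrib] at this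
          simp only [h1, h2, if_true, if_false]
          linarith
      · have h2 : ¬ k ≤ i := fun h => h1 (hjk.le.trans h)
        simp [h1, h2, h0]
    · simp_rw [eform, Finset.sum_add_distrib, Finset.sum_sub_distrib, Finset.sum_ite_eq']
      simp [hsum]

lemma prod_split {n : ℕ} (f : Fin n → ℝ) {j k : Fin n} (hjk : j ≠ k) :
    ∏ i, f i = f j * f k * ∏ i ∈ (Finset.univ.erase j).erase k, f i := by
  rw [mul_assoc, Finset.mul_prod_erase _ f (by simp [hjk.symm]),
    Finset.mul_prod_erase _ f (Finset.mem_univ j)]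

lemma prod_update_rest {n : ℕ} (F : ℝ → ℝ) (q : Fin n → ℝ) (j k : Fin n) (a b : ℝ) :
    ∏ i ∈ (Finset.univ.erase j).erase k,
      F (Function.update (Function.update q j a) k b i) =
    ∏ i ∈ (Finset.univ.erase j).erase k, F (q i) := by
  refine Finset.prod_congr rfl fun i hi => ?_
  simp only [Finset.mem_erase, Finset.mem_univ, and_true] at hi
  simp [hi.1, hi.2]

lemma hzeta_prod_sub {n : ℕ} {p q : Fin n → ℝ} (hq : ∀ j, 1 < q j)
    (h : Majorizes p q) :
    CompletelyMonotonicOn (fun x => ∏ j, hzeta (q j) x - ∏ j, hzeta (p j) x) := by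
  obtain ⟨hanti, -, hle, hsum, -⟩ := h
  refine majorization_induction hanti
    (fun q => CompletelyMonotonicOn (fun x => ∏ j, hzeta (q j) x - ∏ j, hzeta (p j) x))
    ?_ ?_ _ q le_rfl hq hle hsum
  · exact CompletelyMonotonicOn.zero.congr fun x _ => by simp
  · intro q j k a b hjk hq hkb hba haj hs hR
    have h1 := (hzeta_pair hkb hba haj (hq k) hs).mul (CompletelyMonotonicOn.prod
      ((Finset.univ.erase j).erase k) (f := fun i x => hzeta (q i) x) fun i _ => hzeta_cm (hq i))
    refine (h1.add hR).congr fun x _ => ?_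
    simp only
    rw [prod_split (fun i => hzeta (q i) x) hjk,
      prod_split (fun i => hzeta (Function.update (Function.update q j a) k b i) x) hjk,
      prod_update_rest (fun t => hzeta t x)]
    simp only [Function.update_self, Function.update_of_ne hjk]
    ring

lemma hzeta_prod_sub' {n : ℕ} {p q : Fin n → ℝ} (hq : ∀ j, 1 < q j)
    (h : Majorizes p q) :
    CompletelyMonotonicOn (fun x => ∏ j, ((p j - 1) * hzeta (p j) x) -
      ∏ j, ((q j - 1) * hzeta (q j) x)) := by
  obtain ⟨hanti, -, hle, hsum, -⟩ := h
  refine majorization_induction hanti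
    (fun q => CompletelyMonotonicOn (fun x => ∏ j, ((p j - 1) * hzeta (p j) x) -
      ∏ j, ((q j - 1) * hzeta (q j) x)))
    ?_ ?_ _ q le_rfl hq hle hsum
  · exact CompletelyMonotonicOn.zero.congr fun x _ => by simp
  · intro q j k a b hjk hq hkb hba haj hs hR
    have h1 := (hzeta_pair' hkb hba haj (hq k) hs).mul (CompletelyMonotonicOn.prod
      ((Finset.univ.erase j).erase k) (f := fun i x => (q i - 1) * hzeta (q i) x) fun i _ =>
        (hzeta_cm (hq i)).const_mul (by linarith [hq i]))
    refine (h1.add hR).congr fun x _ => ?_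
    simp only
    rw [prod_split (fun i => (q i - 1) * hzeta (q i) x) hjk,
      prod_split (fun i => (Function.update (Function.update q j a) k b i - 1) *
        hzeta (Function.update (Function.update q j a) k b i) x) hjk,
      prod_update_rest (fun t => (t - 1) * hzeta t x)]
    simp only [Function.update_self, Function.update_of_ne hjk]
    ring

/-! ### Asymptotics of the Hurwitz zeta function -/

lemma sub_one_mul_hzeta_eq {p x : ℝ} (hp : 1 < p) (hx : 0 < x) :
    ENNReal.ofReal ((p - 1) * hzeta p x) =
      ∫⁻ t, fden kB (p - 1) t * ENNReal.ofReal (exp (-(x * t))) := by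
  rw [← (isLaplace_kB hp).eq x hx, lintegral_kmeas measurable_kB]

lemma rpow_le_hzeta {p x : ℝ} (hp : 1 < p) (hx : 0 < x) :
    x ^ (-(p - 1)) ≤ (p - 1) * hzeta p x := by
  have hp' : 0 < p - 1 := by linarith
  rw [← ENNReal.ofReal_le_ofReal_iff (mul_pos hp' (hzeta_pos hp hx)).le,
    sub_one_mul_hzeta_eq hp hx, ← lintegral_gden_exp hp' hx]
  refine lintegral_mono fun t => ?_
  by_cases ht : 0 < t
  · have := ENNReal.one_le_ofReal.2 (one_le_kB ht)
    rw [fden]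
    gcongr
    exact le_mul_of_one_le_right' this
  · simp [fden, gden, ht]

lemma hzeta_le_rpow {p x : ℝ} (hp : 1 < p) (hx : 0 < x) :
    (p - 1) * hzeta p x ≤ x ^ (-(p - 1)) + (p - 1) * x ^ (-p) := by
  have hp' : 0 < p - 1 := by linarith
  rw [← ENNReal.ofReal_le_ofReal_iff (by positivity), sub_one_mul_hzeta_eq hp hx,
    ENNReal.ofReal_add (by positivity) (by positivity), ENNReal.ofReal_mul hp'.le,
    ← lintegral_gden_exp hp' hx, ← lintegral_gden_exp (by linarith) hx,
    ← lintegral_const_mul' _ _ ENNReal.ofReal_ne_top, ← lintegral_add_left (by fun_prop)]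
  refine lintegral_mono fun t => ?_
  by_cases ht : 0 < t
  · rw [← mul_assoc, ← gden_sub_one hp, ← add_mul, fden]
    gcongr
    calc gden (p - 1) t * ENNReal.ofReal (kB t)
        ≤ gden (p - 1) t * ENNReal.ofReal (1 + t) := by gcongr; exact kB_le ht
      _ = _ := by rw [ENNReal.ofReal_add zero_le_one ht.le, mul_add, ENNReal.ofReal_one, mul_one]
  · simp [fden, gden, ht]

/-- `(p - 1) ζ(p, x) ~ x ^ (1 - p)` as `x → ∞`. -/
lemma tendsto_hzeta_atTop {p : ℝ} (hp : 1 < p) :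
    Tendsto (fun x => x ^ (p - 1) * ((p - 1) * hzeta p x)) atTop (𝓝 1) := by
  have hp' : 0 < p - 1 := by linarith
  have hup : Tendsto (fun x : ℝ => 1 + (p - 1) * x⁻¹) atTop (𝓝 1) := by
    simpa using (tendsto_inv_atTop_zero.const_mul (p - 1)).const_add 1
  refine tendsto_of_tendsto_of_tendsto_of_le_of_le' tendsto_const_nhds hup ?_ ?_
  · filter_upwards [eventually_gt_atTop 0] with x hx
    calc (1 : ℝ) = x ^ (p - 1) * x ^ (-(p - 1)) := by rw [← rpow_add hx]; simp
      _ ≤ _ := by gcongr; exact rpow_le_hzeta hp hx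
  · filter_upwards [eventually_gt_atTop 0] with x hx
    calc _ ≤ x ^ (p - 1) * (x ^ (-(p - 1)) + (p - 1) * x ^ (-p)) := by
          gcongr; exact hzeta_le_rpow hp hx
      _ = x ^ (p - 1) * x ^ (-(p - 1)) + (p - 1) * (x ^ (p - 1) * x ^ (-p)) := by ring
      _ = _ := by
          rw [← rpow_add hx, ← rpow_add hx, ← rpow_neg_one x]
          congr 3
          · simp
          · ring

lemma hzeta_eq_add {p x : ℝ} (hp : 1 < p) (hx : 0 < x) :
    hzeta p x = x ^ (-p) + hzeta p (x + 1) := by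
  rw [hzeta, (summable_hzeta hp hx).tsum_eq_zero_add, hzeta]
  congr 1
  · simp
  · refine tsum_congr fun k => ?_
    push_cast
    ring_nf

/-- `ζ(p, x) ~ x ^ (-p)` as `x → 0⁺`. -/
lemma tendsto_hzeta_zero {p : ℝ} (hp : 1 < p) :
    Tendsto (fun x => x ^ p * hzeta p x) (𝓝[>] 0) (𝓝 1) := by
  have hp' : 0 < p - 1 := by linarith
  have hpow : Tendsto (fun x : ℝ => x ^ p) (𝓝[>] 0) (𝓝 0) := by
    have := (continuousAt_rpow_const (0 : ℝ) p (Or.inr (by linarith))).tendsto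
    rw [zero_rpow (by linarith)] at this
    exact this.mono_left nhdsWithin_le_nhds
  have hup : Tendsto (fun x : ℝ => 1 + x ^ p * (p / (p - 1))) (𝓝[>] 0) (𝓝 1) := by
    simpa using (hpow.mul_const (p / (p - 1))).const_add 1
  have key : ∀ x : ℝ, 0 < x → x ^ p * hzeta p x = 1 + x ^ p * hzeta p (x + 1) := by
    intro x hx
    rw [hzeta_eq_add hp hx, mul_add, ← rpow_add hx]
    simp
  refine tendsto_of_tendsto_of_tendsto_of_le_of_le' tendsto_const_nhds hup ?_ ?_
  · filter_upwards [self_mem_nhdsWithin] with x hx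
    have hx' : 0 < x := hx
    rw [key x hx']
    have := hzeta_pos hp (show 0 < x + 1 by linarith)
    have := rpow_pos_of_pos hx' p
    linarith [mul_pos ‹0 < x ^ p› ‹0 < hzeta p (x + 1)›]
  · filter_upwards [self_mem_nhdsWithin] with x hx
    have hx' : 0 < x := hx
    rw [key x hx']
    gcongr
    rw [le_div_iff₀ hp', mul_comm]
    have h1 := hzeta_le_rpow hp (show 0 < x + 1 by linarith)
    have h2 := rpow_le_one_of_one_le_of_nonpos (show 1 ≤ x + 1 by linarith)
      (show -(p - 1) ≤ 0 by linarith)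
    have h3 := rpow_le_one_of_one_le_of_nonpos (show 1 ≤ x + 1 by linarith)
      (show -p ≤ 0 by linarith)
    nlinarith

lemma prod_rpow_mul {n : ℕ} {x : ℝ} (hx : 0 < x) (e f : Fin n → ℝ) :
    ∏ j, (x ^ e j * f j) = x ^ (∑ j, e j) * ∏ j, f j := by
  rw [Finset.prod_mul_distrib, rpow_sum_of_pos hx]

/-! ### The characterization -/

theorem stmt5 (n : ℕ) (hn : 2 ≤ n) (p q : Fin n → ℝ)
    (hp : ∀ j, 1 < p j) (hq : ∀ j, 1 < q j) (hmaj : Majorizes p q) (l : ℝ) :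
    (CompletelyMonotonicOn (fun x =>
        ∏ j, hzeta (p j) x - l * ∏ j, hzeta (q j) x) ↔
      l ≤ ∏ j, (q j - 1) / (p j - 1)) ∧
    (CompletelyMonotonicOn (fun x =>
        l * ∏ j, hzeta (q j) x - ∏ j, hzeta (p j) x) ↔ 1 ≤ l) := by
  have hP : 0 < ∏ j, (p j - 1) := Finset.prod_pos fun j _ => by linarith [hp j]
  have hQ : 0 < ∏ j, (q j - 1) := Finset.prod_pos fun j _ => by linarith [hq j]
  have hcm : CompletelyMonotonicOn (fun x => ∏ j, hzeta (q j) x) :=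
    CompletelyMonotonicOn.prod Finset.univ (f := fun j x => hzeta (q j) x)
      fun j _ => hzeta_cm (hq j)
  have hsum : ∑ j, p j = ∑ j, q j := hmaj.2.2.2.1
  refine ⟨⟨fun h => ?_, fun h => ?_⟩, ⟨fun h => ?_, fun h => ?_⟩⟩
  -- compare leading terms as `x → ∞`
  · have hlim : ∀ r : Fin n → ℝ, (∀ j, 1 < r j) → Tendsto (fun x : ℝ =>
        ∏ j, (x ^ (r j - 1) * ((r j - 1) * hzeta (r j) x))) atTop (𝓝 1) := fun r hr => by
      simpa using tendsto_finsetProd Finset.univ fun j _ => tendsto_hzeta_atTop (hr j)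
    have hlim' : ∀ r : Fin n → ℝ, (∀ j, 1 < r j) → Tendsto (fun x : ℝ =>
        x ^ (∑ j, (r j - 1)) * ∏ j, hzeta (r j) x) atTop (𝓝 (∏ j, (r j - 1))⁻¹) := fun r hr => by
      have hR : 0 < ∏ j, (r j - 1) := Finset.prod_pos fun j _ => by linarith [hr j]
      have := (hlim r hr).const_mul (∏ j, (r j - 1))⁻¹
      rw [mul_one] at this
      refine this.congr' ?_
      filter_upwards [eventually_gt_atTop 0] with x hx
      rw [prod_rpow_mul hx, Finset.prod_mul_distrib]
      field_simp
    have hpq : ∑ j, (p j - 1) = ∑ j, (q j - 1) := by simp [Finset.sum_sub_distrib, hsum]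
    have := le_of_tendsto_of_tendsto ((hlim' q hq).const_mul l) (hlim' p hp) (by
      filter_upwards [eventually_gt_atTop 0] with x hx
      have h0 := h.nonneg hx
      have : 0 < x ^ (∑ j, (q j - 1)) := rpow_pos_of_pos hx _
      rw [hpq, mul_left_comm]
      gcongr
      linarith)
    rw [← div_eq_mul_inv, div_le_iff₀ hQ] at this
    rw [Finset.prod_div_distrib]
    calc l ≤ _ := this
      _ = _ := by rw [mul_comm, div_eq_mul_inv]
  · have h1 := (hzeta_prod_sub' hq hmaj).const_mul (inv_nonneg.2 hP.le)
    have h2 := hcm.const_mul (sub_nonneg.2 h)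
    refine (h1.add h2).congr fun x _ => ?_
    simp only [Finset.prod_mul_distrib, Finset.prod_div_distrib]
    field_simp
    ring
  -- compare leading terms as `x → 0⁺`
  · have hlim : ∀ r : Fin n → ℝ, (∀ j, 1 < r j) → Tendsto (fun x : ℝ =>
        ∏ j, (x ^ r j * hzeta (r j) x)) (𝓝[>] 0) (𝓝 1) := fun r hr => by
      simpa using tendsto_finsetProd Finset.univ fun j _ => tendsto_hzeta_zero (hr j)
    have := le_of_tendsto_of_tendsto (hlim p hp) ((hlim q hq).const_mul l) (by
      filter_upwards [self_mem_nhdsWithin] with x hx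
      have hx' : 0 < x := hx
      have h0 := h.nonneg hx'
      have : 0 < x ^ (∑ j, q j) := rpow_pos_of_pos hx' _
      rw [prod_rpow_mul hx', prod_rpow_mul hx', hsum, mul_left_comm]
      gcongr
      linarith)
    simpa using this
  · have h1 := hzeta_prod_sub hq hmaj
    have h2 := hcm.const_mul (sub_nonneg.2 h)
    refine (h1.add h2).congr fun x _ => ?_
    simp only
    ring
end

section
/- Let p > 1 and q > 0. Then 1/ζ(p + q) < α_{p,q}/ζ(p + 2q) + β_{p,q}/ζ(p), where α_{p,q} = ((p + q − 1)/(p − 1)) · (2^{p+q} − 1)/(2^{q+1}(2^p − 1)) and β_{p,q} = ((p + q − 1)/(p + 2q − 1)) · 2^{q−1}(2^{p+q} − 1)/(2^{p+2q} − 1), and ζ is the Riemann zeta function. -/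
/-!
Write `f(s) = (s - 1) (1 - 2 ^ (-s)) ζ(s)`. Simplifying the powers of two, the right-hand side,
divided by `(p + q - 1) (1 - 2 ^ (-(p + q)))`, is the mean of `1 / X` and `1 / Y`, where
`X = (p - 1) (1 - 2 ^ (-p)) ζ(p + 2 q)` and
`Y = (p + 2 q - 1) (1 - 2 ^ (-(p + 2 q))) ζ(p)`, while the left-hand side becomes `1 / f(p + q)`.
Clearly `X < Y`, so AM-GM is strict, and as `X Y = f(p) f(p + 2 q)` it is enough to know that `f`
is midpoint log-concave (`log_concave`).

For this, `(1 - 2 ^ (-s)) ζ(s)` is the sum of `n ^ (-s)` over odd `n`, so that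
`f(b + 1) Γ(b) = ∫ x ^ (b - 1) g(x) dx` over `x > 0`, with `g(x) = x / (2 sinh x)`
(`integral_div_sinh`). Since `sinh x ≥ x`, the function `g` is log-concave
(`concaveOn_log_div_sinh`), and Berwald's inequality (`berwald`) says that the moments of a
log-concave function, divided by those of `e ^ (-x)`, are log-concave in the order. It is proved
by counting sign changes (`middle_moment_nonneg`).
-/


open Real

/-- The Riemann zeta function `ζ(s) = ∑_{k=1}^∞ k^{-s}` for real `s`. -/
noncomputable def rzeta (s : ℝ) : ℝ :=
  ∑' k : ℕ, ((k : ℝ) + 1) ^ (-s)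

open MeasureTheory Set

/-! ### Berwald's inequality -/

/-- If the set of `x > 0` with `d x ≥ 0` is an interval and `d` has vanishing moments of orders
`a` and `a + 2 q`, then its moment of order `a + q` is nonnegative: integrate `x ^ (a - 1) d(x)`
against `(x ^ q - x₁ ^ q) (x₂ ^ q - x ^ q)`, where `x₁`, `x₂` are the ends of the interval
(or against `x ^ q - x₁ ^ q` if the interval is unbounded). -/
lemma middle_moment_nonneg {a q : ℝ} (hq : 0 < q) {d : ℝ → ℝ}
    (i0 : IntegrableOn (fun x => x ^ (a - 1) * d x) (Ioi 0))
    (i1 : IntegrableOn (fun x => x ^ (a + q - 1) * d x) (Ioi 0))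
    (i2 : IntegrableOn (fun x => x ^ (a + 2 * q - 1) * d x) (Ioi 0))
    (h0 : ∫ x in Ioi 0, x ^ (a - 1) * d x = 0)
    (h2 : ∫ x in Ioi 0, x ^ (a + 2 * q - 1) * d x = 0)
    (hS : OrdConnected {x | 0 < x ∧ 0 ≤ d x}) :
    0 ≤ ∫ x in Ioi 0, x ^ (a + q - 1) * d x := by
  set S : Set ℝ := {x | 0 < x ∧ 0 ≤ d x} with hSdef
  have hneg : ∀ x, 0 < x → x ∉ S → d x < 0 := by
    intro x hx hxS
    by_contra! h
    exact hxS ⟨hx, h⟩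
  have e1 : ∀ x : ℝ, 0 < x → x ^ (a + q - 1) = x ^ (a - 1) * x ^ q := by
    intro x hx
    rw [← rpow_add hx]; congr 1; ring
  have e2 : ∀ x : ℝ, 0 < x → x ^ (a + 2 * q - 1) = x ^ (a - 1) * (x ^ q * x ^ q) := by
    intro x hx
    rw [← rpow_add hx, ← rpow_add hx]; congr 1; ring
  rcases S.eq_empty_or_nonempty with hE | hne
  · exfalso
    have hd : ∀ x, 0 < x → d x < 0 := fun x hx => hneg x hx (by simp [hE])
    have hpos : ∀ x ∈ Ioi (0 : ℝ), 0 < -(x ^ (a - 1) * d x) := fun x hx => by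
      have := mul_pos (rpow_pos_of_pos hx (a - 1)) (neg_pos.2 (hd x hx))
      linarith
    have key : 0 < ∫ x in Ioi 0, -(x ^ (a - 1) * d x) := by
      have i0' : IntegrableOn (fun x => -(x ^ (a - 1) * d x)) (Ioi 0) := i0.neg
      rw [setIntegral_pos_iff_support_of_nonneg_ae _ i0']
      · have : Function.support (fun x => -(x ^ (a - 1) * d x)) ∩ Ioi 0 = Ioi 0 := by
          apply inter_eq_right.2
          intro x hx
          exact (hpos x hx).ne'
        rw [this]
        simp
      · filter_upwards [self_mem_ae_restrict measurableSet_Ioi] with x hx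
        exact (hpos x hx).le
    rw [integral_neg, h0] at key
    simp at key
  have hbb : BddBelow S := ⟨0, fun x hx => hx.1.le⟩
  set x₁ := sInf S
  have hx₁ : 0 ≤ x₁ := le_csInf hne fun x hx => hx.1.le
  have hlt : ∀ x, x < x₁ → x ∉ S := fun x hx hxS => (csInf_le hbb hxS).not_gt hx
  by_cases hba : BddAbove S
  · set x₂ := sSup S
    have hgt : ∀ x, x₂ < x → x ∉ S := fun x hx hxS => (le_csSup hba hxS).not_gt hx
    have h12 : x₁ ≤ x₂ := csInf_le_csSup hne hbb hba
    have hx₂ : 0 < x₂ := by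
      obtain ⟨y, hy⟩ := hne
      exact hy.1.trans_le (le_csSup hba hy)
    have hpt : ∀ x ∈ Ioi (0 : ℝ),
        0 ≤ x ^ (a - 1) * (d x * ((x ^ q - x₁ ^ q) * (x₂ ^ q - x ^ q))) := by
      intro x hx
      have hx : 0 < x := hx
      apply mul_nonneg (rpow_pos_of_pos hx _).le
      rcases lt_trichotomy x x₁ with h | h | h
      · have hd := hneg x hx (hlt x h)
        have u1 : x ^ q ≤ x₁ ^ q := rpow_le_rpow hx.le h.le hq.le
        have u2 : x ^ q ≤ x₂ ^ q := rpow_le_rpow hx.le (h.le.trans h12) hq.le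
        exact mul_nonneg_of_nonpos_of_nonpos hd.le
          (mul_nonpos_of_nonpos_of_nonneg (by linarith) (by linarith))
      · simp [h]
      · have u1 : x₁ ^ q ≤ x ^ q := rpow_le_rpow hx₁ h.le hq.le
        rcases lt_trichotomy x x₂ with h' | h' | h'
        · obtain ⟨y, hy, hyx⟩ := exists_lt_of_csInf_lt hne h
          obtain ⟨z, hz, hzx⟩ := exists_lt_of_lt_csSup hne h'
          have hd : 0 ≤ d x := (hS.out hy hz ⟨hyx.le, hzx.le⟩).2
          have u2 : x ^ q ≤ x₂ ^ q := rpow_le_rpow hx.le h'.le hq.le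
          exact mul_nonneg hd (mul_nonneg (by linarith) (by linarith))
        · simp [h']
        · have hd := hneg x hx (hgt x h')
          have u2 : x₂ ^ q ≤ x ^ q := rpow_le_rpow hx₂.le h'.le hq.le
          exact mul_nonneg_of_nonpos_of_nonpos hd.le
            (mul_nonpos_of_nonneg_of_nonpos (by linarith) (by linarith))
    have hI := setIntegral_nonneg (μ := volume) measurableSet_Ioi hpt
    have hexp : ∫ x in Ioi 0, x ^ (a - 1) * (d x * ((x ^ q - x₁ ^ q) * (x₂ ^ q - x ^ q)))
        = ∫ x in Ioi 0, ((x₁ ^ q + x₂ ^ q) * (x ^ (a + q - 1) * d x)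
            - x ^ (a + 2 * q - 1) * d x - (x₁ ^ q * x₂ ^ q) * (x ^ (a - 1) * d x)) := by
      apply setIntegral_congr_fun measurableSet_Ioi
      intro x hx
      simp only
      rw [e1 x hx, e2 x hx]
      ring
    have i3 : IntegrableOn (fun x => (x₁ ^ q + x₂ ^ q) * (x ^ (a + q - 1) * d x)
        - x ^ (a + 2 * q - 1) * d x) (Ioi 0) := (i1.const_mul _).sub i2
    rw [hexp, integral_sub i3 (i0.const_mul _),
      integral_sub (i1.const_mul _) i2, integral_const_mul, integral_const_mul, h0, h2] at hI
    have hc : 0 < x₁ ^ q + x₂ ^ q := add_pos_of_nonneg_of_pos (rpow_nonneg hx₁ _)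
      (rpow_pos_of_pos hx₂ _)
    simp only [sub_zero, mul_zero] at hI
    exact nonneg_of_mul_nonneg_right hI hc
  · have hpt : ∀ x ∈ Ioi (0 : ℝ), 0 ≤ x ^ (a - 1) * (d x * (x ^ q - x₁ ^ q)) := by
      intro x hx
      have hx : 0 < x := hx
      apply mul_nonneg (rpow_pos_of_pos hx _).le
      rcases lt_trichotomy x x₁ with h | h | h
      · have hd := hneg x hx (hlt x h)
        have u1 : x ^ q ≤ x₁ ^ q := rpow_le_rpow hx.le h.le hq.le
        exact mul_nonneg_of_nonpos_of_nonpos hd.le (by linarith)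
      · simp [h]
      · have u1 : x₁ ^ q ≤ x ^ q := rpow_le_rpow hx₁ h.le hq.le
        obtain ⟨y, hy, hyx⟩ := exists_lt_of_csInf_lt hne h
        obtain ⟨z, hz, hzx⟩ := not_bddAbove_iff.1 hba x
        have hd : 0 ≤ d x := (hS.out hy hz ⟨hyx.le, hzx.le⟩).2
        exact mul_nonneg hd (by linarith)
    have hI := setIntegral_nonneg (μ := volume) measurableSet_Ioi hpt
    have hexp : ∫ x in Ioi 0, x ^ (a - 1) * (d x * (x ^ q - x₁ ^ q))
        = ∫ x in Ioi 0, (x ^ (a + q - 1) * d x - x₁ ^ q * (x ^ (a - 1) * d x)) := by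
      apply setIntegral_congr_fun measurableSet_Ioi
      intro x hx
      simp only
      rw [e1 x hx]
      ring
    rw [hexp, integral_sub i1 (i0.const_mul _), integral_const_mul, h0] at hI
    simpa using hI

lemma integrableOn_rpow_mul_exp {b r : ℝ} (hb : 0 < b) (hr : 0 < r) :
    IntegrableOn (fun x => x ^ (b - 1) * rexp (-(r * x))) (Ioi 0) := by
  have := integrableOn_rpow_mul_exp_neg_mul_rpow (p := 1) (s := b - 1) (b := r)
    (by linarith) one_pos hr
  simpa using this

/-- Berwald's inequality at three equally spaced points: for log-concave `g` on `(0, ∞)`, the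
normalized moments `(∫ x ^ (b - 1) g(x) dx) / Γ(b)` are log-concave in `b`. The function `g` is
compared with the exponential `C e ^ (-r x)` having the same two outer moments. -/
lemma berwald {a q : ℝ} (ha : 0 < a) (hq : 0 < q) {g : ℝ → ℝ} (hg : ∀ x, 0 < x → 0 < g x)
    (hconc : ConcaveOn ℝ (Ioi 0) (fun x => log (g x))) {F : ℝ → ℝ}
    (hF : ∀ b, 0 < b → 0 < F b)
    (hI : ∀ b, 0 < b → ∫ x in Ioi 0, x ^ (b - 1) * g x = F b * Gamma b) :
    F a * F (a + 2 * q) ≤ F (a + q) ^ 2 := by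
  have hint : ∀ b : ℝ, 0 < b → IntegrableOn (fun x => x ^ (b - 1) * g x) (Ioi 0) := by
    intro b hb
    -- a non-integrable function would have integral `0`, but the moments are positive
    by_contra h
    have h1 := hI b hb
    rw [integral_undef h] at h1
    exact (mul_pos (hF b hb) (Gamma_pos_of_pos hb)).ne h1
  have ha1 : 0 < a + q := by linarith
  have ha2 : 0 < a + 2 * q := by linarith
  have p0 := hF a ha
  have p1 := hF _ ha1
  have p2 := hF _ ha2
  -- `r` and `C` solve `C r ^ (-a) = F a` and `C r ^ (-(a + 2 q)) = F (a + 2 q)`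
  set r := (F a / F (a + 2 * q)) ^ (1 / (2 * q)) with hr_def
  have hr : 0 < r := rpow_pos_of_pos (div_pos p0 p2) _
  set C := F a * r ^ a with hC_def
  have hC : 0 < C := mul_pos p0 (rpow_pos_of_pos hr _)
  have hr2 : r ^ q * r ^ q = F a / F (a + 2 * q) := by
    rw [← rpow_add hr, hr_def, ← rpow_mul (div_pos p0 p2).le]
    rw [show 1 / (2 * q) * (q + q) = 1 by field_simp; norm_num, rpow_one]
  have hrq : 0 < r ^ q := rpow_pos_of_pos hr q
  have split : ∀ b, 0 < b → IntegrableOn (fun x => x ^ (b - 1) * (g x - C * rexp (-(r * x))))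
      (Ioi 0) ∧ ∫ x in Ioi 0, x ^ (b - 1) * (g x - C * rexp (-(r * x)))
        = (F b - C * (1 / r) ^ b) * Gamma b := by
    intro b hb
    have hE := integrableOn_rpow_mul_exp hb hr
    have heq : (fun x => x ^ (b - 1) * (g x - C * rexp (-(r * x))))
        = fun x => x ^ (b - 1) * g x - C * (x ^ (b - 1) * rexp (-(r * x))) := by
      funext x; ring
    rw [heq]
    refine ⟨(hint b hb).sub (hE.const_mul C), ?_⟩
    rw [integral_sub (hint b hb) (hE.const_mul C), integral_const_mul, hI b hb,
      integral_rpow_mul_exp_neg_mul_Ioi hb hr]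
    ring
  have hinv : ∀ b : ℝ, (1 / r) ^ b = (r ^ b)⁻¹ := fun b => by rw [one_div, inv_rpow hr.le]
  have hra : 0 < r ^ a := rpow_pos_of_pos hr a
  have c0 : C * (1 / r) ^ a = F a := by
    rw [hinv, hC_def]; field_simp
  have c1 : C * (1 / r) ^ (a + q) = F a / r ^ q := by
    rw [hinv, hC_def, rpow_add hr]; field_simp
  have c2 : C * (1 / r) ^ (a + 2 * q) = F (a + 2 * q) := by
    have e : r ^ (a + 2 * q) = r ^ a * (F a / F (a + 2 * q)) := by
      rw [two_mul q, rpow_add hr, rpow_add hr, hr2, two_mul]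
    rw [hinv, hC_def, e]
    generalize F (a + 2 * q) = F₂ at *
    field_simp
  have hS : OrdConnected {x | 0 < x ∧ 0 ≤ g x - C * rexp (-(r * x))} := by
    have hlin : ConcaveOn ℝ (Ioi 0) (fun x : ℝ => r * x) :=
      ⟨convex_Ioi 0, fun x _ y _ s t _ _ _ => by simp only [smul_eq_mul]; linarith⟩
    have hc := ((hconc.add hlin).convex_ge (log C)).ordConnected
    suffices hset : {x | 0 < x ∧ 0 ≤ g x - C * rexp (-(r * x))} = {x | x ∈ Ioi 0 ∧
        log C ≤ ((fun x => log (g x)) + fun x => r * x) x} by rw [hset]; exact hc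
    refine Set.ext fun x => ?_
    simp only [mem_ofPred_eq, mem_Ioi, Pi.add_apply]
    refine and_congr_right fun hx => ?_
    rw [sub_nonneg, ← log_le_log_iff (mul_pos hC (exp_pos _)) (hg x hx),
      log_mul hC.ne' (exp_pos _).ne', log_exp]
    constructor <;> intro h <;> linarith
  have hmid := middle_moment_nonneg hq (split a ha).1 (split _ ha1).1 (split _ ha2).1
    (by rw [(split a ha).2, c0]; ring) (by rw [(split _ ha2).2, c2]; ring) hS
  rw [(split _ ha1).2, c1] at hmid
  have hge : F a / r ^ q ≤ F (a + q) :=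
    sub_nonneg.1 (nonneg_of_mul_nonneg_left hmid (Gamma_pos_of_pos ha1))
  calc F a * F (a + 2 * q) = (F a / r ^ q) ^ 2 := by
        rw [div_pow, sq (r ^ q), hr2]; field_simp
    _ ≤ F (a + q) ^ 2 := by
        apply pow_le_pow_left₀ (div_pos p0 hrq).le hge

/-! ### Log-concavity of `x / (2 sinh x)` -/

/-- The second derivative of `log (x / sinh x)` is `-1 / x ^ 2 + 1 / sinh x ^ 2 ≤ 0`. -/
lemma concaveOn_log_div_sinh : ConcaveOn ℝ (Ioi 0) (fun x => log (x / (2 * sinh x))) := by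
  have hs : ∀ x : ℝ, 0 < x → 0 < sinh x := fun x hx => sinh_pos_iff.2 hx
  have hc : ConcaveOn ℝ (Ioi 0) (fun x => log x - log (sinh x) - log 2) := by
    refine concaveOn_of_hasDerivWithinAt2_nonpos (convex_Ioi 0)
      (f' := fun x => x⁻¹ - cosh x / sinh x)
      (f'' := fun x => -(x ^ 2)⁻¹ - (sinh x * sinh x - cosh x * cosh x) / sinh x ^ 2)
      ?_ ?_ ?_ ?_
    · apply ContinuousOn.sub _ continuousOn_const
      apply ContinuousOn.sub
      · exact continuousOn_log.mono fun x hx => (ne_of_gt hx)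
      · exact continuous_sinh.continuousOn.log fun x hx => (hs x hx).ne'
    · rw [interior_Ioi]
      intro x hx
      exact (((hasDerivAt_log (ne_of_gt hx)).sub
        ((hasDerivAt_sinh x).log (hs x hx).ne')).sub_const _).hasDerivWithinAt
    · rw [interior_Ioi]
      intro x hx
      exact ((hasDerivAt_inv (ne_of_gt hx)).sub
        ((hasDerivAt_cosh x).div (hasDerivAt_sinh x) (hs x hx).ne')).hasDerivWithinAt
    · rw [interior_Ioi]
      intro x hx
      have hx : 0 < x := hx
      have h1 : sinh x * sinh x - cosh x * cosh x = -1 := by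
        have := cosh_sq x; linarith
      have h2 : (sinh x ^ 2)⁻¹ ≤ (x ^ 2)⁻¹ := by
        have := self_le_sinh_iff.2 hx.le
        gcongr
      rw [h1, neg_div, one_div]
      linarith
  refine hc.congr fun x hx => ?_
  have hx : 0 < x := hx
  rw [log_div hx.ne' (mul_pos two_pos (hs x hx)).ne', log_mul two_ne_zero (hs x hx).ne']
  ring

/-! ### The sum over odd integers as a Mellin transform -/

lemma summable_rzeta {s : ℝ} (hs : 1 < s) : Summable fun k : ℕ => ((k : ℝ) + 1) ^ (-s) := by
  have h := (summable_nat_add_iff 1).2 (summable_nat_rpow.2 (neg_lt_neg hs))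
  simpa using h

lemma rzeta_pos {s : ℝ} (hs : 1 < s) : 0 < rzeta s := by
  refine (summable_rzeta hs).tsum_pos (fun k => by positivity) 0 (by simp)

lemma rzeta_lt {s t : ℝ} (hs : 1 < s) (hst : s < t) : rzeta t < rzeta s := by
  refine Summable.tsum_lt_tsum (i := 1) (fun k => ?_) ?_ (summable_rzeta (hs.trans hst))
    (summable_rzeta hs)
  · exact rpow_le_rpow_of_exponent_le (by simp) (by linarith)
  · exact rpow_lt_rpow_of_exponent_lt (by norm_num) (by linarith)

lemma hasSum_odd {s : ℝ} (hs : 1 < s) :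
    HasSum (fun k : ℕ => (2 * (k : ℝ) + 1) ^ (-s)) ((1 - 2 ^ (-s)) * rzeta s) := by
  have hsum := summable_rzeta hs
  have hodd : Summable fun k : ℕ => (((2 * k : ℕ) : ℝ) + 1) ^ (-s) :=
    hsum.comp_injective (i := fun k : ℕ => 2 * k) (fun a b h => by dsimp only at h; omega)
  have heven : Summable fun k : ℕ => (((2 * k + 1 : ℕ) : ℝ) + 1) ^ (-s) :=
    hsum.comp_injective (i := fun k : ℕ => 2 * k + 1) (fun a b h => by dsimp only at h; omega)
  have h := tsum_even_add_odd (f := fun k : ℕ => ((k : ℝ) + 1) ^ (-s)) hodd heven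
  have h2 : ∑' k : ℕ, (((2 * k + 1 : ℕ) : ℝ) + 1) ^ (-s) = 2 ^ (-s) * rzeta s := by
    rw [rzeta, ← tsum_mul_left]
    congr 1
    funext k
    rw [← mul_rpow (by norm_num) (by positivity)]
    congr 1
    push_cast; ring
  rw [h2] at h
  have h3 := hodd.hasSum
  rw [show ∑' k : ℕ, (((2 * k : ℕ) : ℝ) + 1) ^ (-s) = (1 - 2 ^ (-s)) * rzeta s by
    rw [rzeta] at h ⊢; linarith] at h3
  simpa using h3

lemma hasSum_exp_odd {x : ℝ} (hx : 0 < x) :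
    HasSum (fun k : ℕ => rexp (-((2 * (k : ℝ) + 1) * x))) (1 / (2 * sinh x)) := by
  have h := (hasSum_geometric_of_lt_one (exp_pos (-(2 * x))).le
    (exp_lt_one_iff.2 (by linarith : -(2 * x) < 0))).mul_left (rexp (-x))
  have hf : (fun k : ℕ => rexp (-((2 * (k : ℝ) + 1) * x)))
      = fun k : ℕ => rexp (-x) * rexp (-(2 * x)) ^ k := by
    funext k
    rw [← exp_nat_mul, ← exp_add]
    congr 1; ring
  have hg : 1 / (2 * sinh x) = rexp (-x) * (1 - rexp (-(2 * x)))⁻¹ := by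
    have hs : 0 < sinh x := sinh_pos_iff.2 hx
    have h1 : rexp (-(2 * x)) = rexp (-x) * rexp (-x) := by rw [← exp_add]; congr 1; ring
    have h2 : rexp x * rexp (-x) = 1 := by rw [← exp_add]; simp
    have h4 : 1 - rexp (-(2 * x)) = rexp (-x) * (2 * sinh x) := by
      rw [sinh_eq, h1]; linear_combination -h2
    rw [h4]
    field_simp
  rw [hf, hg]
  exact h

/-- The Mellin transform of `1 / (2 sinh x) = ∑ e ^ (-(2 k + 1) x)`, shifted by one. -/
lemma integral_div_sinh {b : ℝ} (hb : 0 < b) :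
    ∫ x in Ioi 0, x ^ (b - 1) * (x / (2 * sinh x))
      = (b * ((1 - 2 ^ (-(b + 1))) * rzeta (b + 1))) * Gamma b := by
  have hb1 : 0 < b + 1 := by linarith
  have hr : ∀ k : ℕ, (0 : ℝ) < 2 * k + 1 := fun k => by positivity
  have hval : ∀ k : ℕ, ∫ x in Ioi 0, x ^ (b + 1 - 1) * rexp (-((2 * (k : ℝ) + 1) * x))
      = (2 * (k : ℝ) + 1) ^ (-(b + 1)) * Gamma (b + 1) := by
    intro k
    rw [integral_rpow_mul_exp_neg_mul_Ioi hb1 (hr k), one_div, inv_rpow (hr k).le,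
      rpow_neg (hr k).le]
  have hs := (hasSum_odd (by linarith : 1 < b + 1)).mul_right (Gamma (b + 1))
  have H := hasSum_integral_of_summable_integral_norm (μ := volume.restrict (Ioi 0))
    (F := fun (k : ℕ) (x : ℝ) => x ^ (b + 1 - 1) * rexp (-((2 * (k : ℝ) + 1) * x)))
    (fun k => integrableOn_rpow_mul_exp hb1 (hr k)) (by
      refine hs.summable.congr fun k => ?_
      rw [← hval k]
      refine setIntegral_congr_fun measurableSet_Ioi fun x hx => ?_
      have hx : 0 < x := hx
      exact (norm_of_nonneg (by positivity)).symm)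
  simp only [hval] at H
  have hu := H.unique hs
  have hcongr : ∫ x in Ioi 0, x ^ (b - 1) * (x / (2 * sinh x))
      = ∫ x in Ioi 0, ∑' k : ℕ, x ^ (b + 1 - 1) * rexp (-((2 * (k : ℝ) + 1) * x)) := by
    refine setIntegral_congr_fun measurableSet_Ioi fun x hx => ?_
    have hx : 0 < x := hx
    rw [tsum_mul_left, (hasSum_exp_odd hx).tsum_eq, show b + 1 - 1 = b - 1 + 1 by ring,
      rpow_add hx, rpow_one]
    ring
  rw [hcongr, hu, Gamma_add_one hb.ne']
  ring

lemma two_rpow_neg_lt_one {s : ℝ} (hs : 0 < s) : (2 : ℝ) ^ (-s) < 1 :=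
  rpow_lt_one_of_one_lt_of_neg (by norm_num) (by linarith)

/-! ### Log-concavity in `s` and the inequality -/

/-- Midpoint log-concavity of `(s - 1) (1 - 2 ^ (-s)) ζ(s)`. -/
lemma log_concave {p q : ℝ} (hp : 1 < p) (hq : 0 < q) :
    ((p - 1) * (1 - 2 ^ (-p)) * rzeta p)
        * ((p + 2 * q - 1) * (1 - 2 ^ (-(p + 2 * q))) * rzeta (p + 2 * q))
      ≤ ((p + q - 1) * (1 - 2 ^ (-(p + q))) * rzeta (p + q)) ^ 2 := by
  have h := berwald (a := p - 1) (q := q) (by linarith) hq (g := fun x => x / (2 * sinh x))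
    (fun x hx => div_pos hx (mul_pos two_pos (sinh_pos_iff.2 hx))) concaveOn_log_div_sinh
    (F := fun b => b * ((1 - 2 ^ (-(b + 1))) * rzeta (b + 1)))
    (fun b hb => mul_pos hb (mul_pos (sub_pos.2 (two_rpow_neg_lt_one (by linarith)))
      (rzeta_pos (by linarith)))) (fun b hb => integral_div_sinh hb)
  rw [show p - 1 + 1 = p by ring, show p - 1 + q + 1 = p + q by ring,
    show p - 1 + 2 * q + 1 = p + 2 * q by ring, show p - 1 + q = p + q - 1 by ring,
    show p - 1 + 2 * q = p + 2 * q - 1 by ring] at h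
  simpa only [mul_assoc] using h

theorem stmt10 (p q : ℝ) (hp : 1 < p) (hq : 0 < q) :
    1 / rzeta (p + q) <
      ((p + q - 1) / (p - 1) * (((2 : ℝ) ^ (p + q) - 1) / ((2 : ℝ) ^ (q + 1) * ((2 : ℝ) ^ p - 1))))
          / rzeta (p + 2 * q) +
      ((p + q - 1) / (p + 2 * q - 1) *
          ((2 : ℝ) ^ (q - 1) * ((2 : ℝ) ^ (p + q) - 1) / ((2 : ℝ) ^ (p + 2 * q) - 1)))
          / rzeta p := by
  have hlc := log_concave hp hq
  have hz0 := rzeta_pos hp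
  have hz1 := rzeta_pos (by linarith : 1 < p + q)
  have hz2 := rzeta_pos (by linarith : 1 < p + 2 * q)
  have hzlt := rzeta_lt hp (by linarith : p < p + 2 * q)
  have hD0 : 0 < 1 - (2 : ℝ) ^ (-p) := sub_pos.2 (two_rpow_neg_lt_one (by linarith))
  have hD1 : 0 < 1 - (2 : ℝ) ^ (-(p + q)) := sub_pos.2 (two_rpow_neg_lt_one (by linarith))
  have hD2 : 0 < 1 - (2 : ℝ) ^ (-(p + 2 * q)) := sub_pos.2 (two_rpow_neg_lt_one (by linarith))
  have hDlt : 1 - (2 : ℝ) ^ (-p) < 1 - (2 : ℝ) ^ (-(p + 2 * q)) :=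
    sub_lt_sub_left (rpow_lt_rpow_of_exponent_lt (by norm_num) (by linarith)) _
  have eqα : ((2 : ℝ) ^ (p + q) - 1) / ((2 : ℝ) ^ (q + 1) * ((2 : ℝ) ^ p - 1))
      = (1 - 2 ^ (-(p + q))) / (2 * (1 - 2 ^ (-p))) := by
    have hP : (1 : ℝ) < 2 ^ p := one_lt_rpow (by norm_num) (by linarith)
    have hQ : (0 : ℝ) < 2 ^ q := by positivity
    rw [rpow_neg two_pos.le, rpow_neg two_pos.le, rpow_add two_pos, rpow_add two_pos, rpow_one]
    generalize (2 : ℝ) ^ p = P at *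
    generalize (2 : ℝ) ^ q = Q at *
    have : P - 1 ≠ 0 := by linarith
    have h3 : P ≠ 0 := by linarith
    have : 1 - P⁻¹ ≠ 0 := (sub_pos.2 (inv_lt_one_of_one_lt₀ hP)).ne'
    field_simp
  have eqβ : (2 : ℝ) ^ (q - 1) * ((2 : ℝ) ^ (p + q) - 1) / ((2 : ℝ) ^ (p + 2 * q) - 1)
      = (1 - 2 ^ (-(p + q))) / (2 * (1 - 2 ^ (-(p + 2 * q)))) := by
    have hP : (1 : ℝ) < 2 ^ (p + 2 * q) := one_lt_rpow (by norm_num) (by linarith)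
    have hQ : (0 : ℝ) < 2 ^ q := by positivity
    have hR : (0 : ℝ) < 2 ^ p := by positivity
    rw [rpow_neg two_pos.le, rpow_neg two_pos.le, rpow_sub two_pos, rpow_one]
    rw [show p + 2 * q = p + q + q by ring, rpow_add two_pos (p + q) q, rpow_add two_pos p q]
      at *
    generalize (2 : ℝ) ^ p = P at *
    generalize (2 : ℝ) ^ q = Q at *
    have : P * Q * Q - 1 ≠ 0 := by linarith
    have : 1 - (P * Q * Q)⁻¹ ≠ 0 := (sub_pos.2 (inv_lt_one_of_one_lt₀ hP)).ne'
    field_simp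
  rw [eqα, eqβ]
  generalize 1 - (2 : ℝ) ^ (-p) = D0 at *
  generalize 1 - (2 : ℝ) ^ (-(p + q)) = D1 at *
  generalize 1 - (2 : ℝ) ^ (-(p + 2 * q)) = D2 at *
  generalize rzeta p = Z0 at *
  generalize rzeta (p + q) = Z1 at *
  generalize rzeta (p + 2 * q) = Z2 at *
  have hp0 : 0 < p - 1 := by linarith
  have hp1 : 0 < p + q - 1 := by linarith
  have hp2 : 0 < p + 2 * q - 1 := by linarith
  have hplt : p - 1 < p + 2 * q - 1 := by linarith
  generalize p - 1 = A0 at *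
  generalize p + q - 1 = A1 at *
  generalize p + 2 * q - 1 = A2 at *
  -- `X ≠ Y` makes the AM-GM step strict
  have hXY : A0 * D0 * Z2 < A2 * D2 * Z0 := by gcongr
  have hX : 0 < A0 * D0 * Z2 := by positivity
  have hprod : (A0 * D0 * Z2) * (A2 * D2 * Z0) ≤ (A1 * D1 * Z1) ^ 2 := by
    linarith
  have hW : 0 < A1 * D1 * Z1 := by positivity
  have e : A1 / A0 * (D1 / (2 * D0)) / Z2 + A1 / A2 * (D1 / (2 * D2)) / Z0
      = A1 * D1 * ((1 / (A0 * D0 * Z2) + 1 / (A2 * D2 * Z0)) / 2) := by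
    field_simp
  have e' : 1 / Z1 = A1 * D1 * (1 / (A1 * D1 * Z1)) := by field_simp
  rw [e, e']
  apply mul_lt_mul_of_pos_left _ (by positivity)
  generalize A0 * D0 * Z2 = X at *
  generalize A2 * D2 * Z0 = Y at *
  generalize A1 * D1 * Z1 = W at *
  have hY : 0 < Y := hX.trans hXY
  have hPXY : 0 < X * Y := mul_pos hX hY
  have key : 2 * (X * Y) < (X + Y) * W := by
    apply lt_of_pow_lt_pow_left₀ 2 (by positivity)
    have h1 : 4 * (X * Y) < (X + Y) ^ 2 := by nlinarith [sq_pos_of_pos (sub_pos.2 hXY)]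
    calc (2 * (X * Y)) ^ 2 = 4 * (X * Y) * (X * Y) := by ring
      _ < (X + Y) ^ 2 * (X * Y) := by gcongr
      _ ≤ (X + Y) ^ 2 * W ^ 2 := by gcongr
      _ = ((X + Y) * W) ^ 2 := by ring
  rw [show (1 / X + 1 / Y) / 2 = (X + Y) / (2 * (X * Y)) by field_simp; ring,
    div_lt_div_iff₀ hW (by positivity)]
  linarith
end
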